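/- arXiv:2405.07296 — 2 statements merged into one kernel-verified Lean document; each statement's English description precedes it below -/
import Mathlib

section
/- Let m ∈ ℕ with m ≥ 1, let a₁,…,a_m ∈ ℕ, let p be a minimal idempotent ultrafilter on ℕ, and let A ∈ a₁·p + ⋯ + a_m·p. Then for every T ∈ 𝒫_f(ℙ) there exist functions α : 𝒫_f(ℕ^ℕ) → ℕ and H : 𝒫_f(ℕ^ℕ) → 𝒫_f(ℕ) such that (1) whenever F ⊊ G in 𝒫_f(ℕ^ℕ), max H(F) < min H(G), and (2) whenever G₁ ⊊ G₂ ⊊ ⋯ is an infinite strictly increasing chain in 𝒫_f(ℕ^ℕ), f_i ∈ G_i for each i ∈ ℕ, P₁,…,P_m ∈ T, and β₁ < ⋯ < β_m are in 𝒫_f(ℕ), then Σ_{l=1}^m a_l·(Σ_{i∈β_l}α(G_i) + P_l(Σ_{i∈β_l}Σ_{t∈H(G_i)}f_i(t))) ∈ A. -/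
namespace MultiCST

/-- The sum `p + q` of ultrafilters on ℕ: `A ∈ p + q` iff `{x : {y : x+y ∈ A} ∈ q} ∈ p`. -/
def uAdd (p q : Ultrafilter ℕ) : Ultrafilter ℕ :=
  p.bind fun x => q.map fun y => x + y

/-- `A ⊆ ℕ` is a J-set. -/
def IsJSet (A : Set ℕ) : Prop :=
  ∀ F : Finset (ℕ → ℕ), F.Nonempty →
    ∃ (a : ℕ) (β : Finset ℕ), β.Nonempty ∧ ∀ f ∈ F, a + ∑ t ∈ β, f t ∈ A

/-- `p ∈ 𝒥`: every member of `p` is a J-set. -/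
def MemJ (p : Ultrafilter ℕ) : Prop := ∀ A : Set ℕ, A ∈ p → IsJSet A

/-- `p` is an idempotent ultrafilter. -/
def IdempotentUF (p : Ultrafilter ℕ) : Prop := uAdd p p = p

/-- `p` is a minimal idempotent ultrafilter. -/
def IsMinimalIdempotent (p : Ultrafilter ℕ) : Prop :=
  IdempotentUF p ∧
    ∀ q : Ultrafilter ℕ, IdempotentUF q → uAdd q p = q → uAdd p q = q → q = p

/-- Tensor product `⊗_{i=1}^m p_i` of ultrafilters on ℕ, as an ultrafilter on `Fin m → ℕ`. -/
def tensor : ∀ m : ℕ, (Fin m → Ultrafilter ℕ) → Ultrafilter (Fin m → ℕ)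
  | 0, _ => pure fun i => i.elim0
  | m + 1, p =>
      (p 0).bind fun x => (tensor m fun i => p i.succ).map fun v => Fin.cons x v

/-- `f : ℕ → ℕ` is (given by) a polynomial with coefficients in ℕ and zero constant term. -/
def IsPolyZeroConst (f : ℕ → ℕ) : Prop :=
  ∃ P : Polynomial ℕ, P.coeff 0 = 0 ∧ ∀ x, f x = P.eval x

/-- The linear combination `a₁·p₁ + a₂·p₂ + ⋯ + a_m·p_m` of ultrafilters on ℕ. -/
def linComb : ∀ m : ℕ, (Fin m → ℕ) → (Fin m → Ultrafilter ℕ) → Ultrafilter ℕ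
  | 0, _, _ => pure 0
  | m + 1, a, p =>
      uAdd ((p 0).map fun x => a 0 * x)
        (linComb m (fun i => a i.succ) fun i => p i.succ)

section pet
variable {V : Type*} [AddCommMonoid V]

/-- normalised shift -/
def shf (s : V) (φ : V → ℤ) : V → ℤ := fun v => φ (s + v) - φ s

/-- polynomial maps of degree at most `d` vanishing at zero -/
def Dg : ℕ → Set (V → ℤ)
  | 0 => {0}
  | d + 1 => {φ | ∀ s, shf s φ - φ ∈ Dg d}

lemma shf_add (s : V) (φ ψ : V → ℤ) : shf s (φ + ψ) = shf s φ + shf s ψ := by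
  funext v; simp only [shf, Pi.add_apply]; ring

lemma shf_sub (s : V) (φ ψ : V → ℤ) : shf s (φ - ψ) = shf s φ - shf s ψ := by
  funext v; simp only [shf, Pi.sub_apply]; ring

lemma shf_shf (s t : V) (φ : V → ℤ) : shf t (shf s φ) = shf (s + t) φ := by
  funext v; simp only [shf, add_assoc]; ring

lemma shf_zero (φ : V → ℤ) (h : φ 0 = 0) : shf 0 φ = φ := by
  funext v; simp [shf, h]

lemma zero_mem_Dg (d : ℕ) : (0 : V → ℤ) ∈ Dg (V := V) d := by
  induction d with
  | zero => simp [Dg]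
  | succ d ih =>
    intro s
    have : shf s (0 : V → ℤ) - 0 = 0 := by funext v; simp [shf]
    rw [this]; exact ih

lemma Dg_at_zero {d : ℕ} {φ : V → ℤ} (h : φ ∈ Dg d) : φ 0 = 0 := by
  induction d generalizing φ with
  | zero => simp only [Dg, Set.mem_singleton_iff] at h; simp [h]
  | succ d ih =>
    have := ih (h 0)
    simpa [shf] using this

lemma add_mem_Dg {d : ℕ} {φ ψ : V → ℤ} (h : φ ∈ Dg d) (h' : ψ ∈ Dg d) : φ + ψ ∈ Dg d := by
  induction d generalizing φ ψ with
  | zero => simp only [Dg, Set.mem_singleton_iff] at h h' ⊢; simp [h, h']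
  | succ d ih =>
    intro s
    have := ih (h s) (h' s)
    rw [shf_add]
    convert this using 1
    abel

lemma smul_mem_Dg {d : ℕ} {φ : V → ℤ} (c : ℤ) (h : φ ∈ Dg d) : c • φ ∈ Dg d := by
  induction d generalizing φ with
  | zero => simp only [Dg, Set.mem_singleton_iff] at h ⊢; simp [h]
  | succ d ih =>
    intro s
    have := ih (h s)
    convert this using 1
    funext v; simp [shf]; ring

lemma sub_mem_Dg {d : ℕ} {φ ψ : V → ℤ} (h : φ ∈ Dg d) (h' : ψ ∈ Dg d) : φ - ψ ∈ Dg d := by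
  have := add_mem_Dg h (smul_mem_Dg (-1) h')
  convert this using 1
  simp [sub_eq_add_neg]

lemma Dg_succ {d : ℕ} {φ : V → ℤ} (h : φ ∈ Dg d) : φ ∈ Dg (d + 1) := by
  induction d generalizing φ with
  | zero =>
    simp only [Dg, Set.mem_singleton_iff] at h; rw [h]; exact zero_mem_Dg _
  | succ d ih => intro s; exact ih (h s)

lemma Dg_mono {d e : ℕ} (hde : d ≤ e) {φ : V → ℤ} (h : φ ∈ Dg d) : φ ∈ Dg e := by
  induction hde with
  | refl => exact h
  | step _ ih => exact Dg_succ ih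

lemma shf_mem_Dg {d : ℕ} {φ : V → ℤ} (s : V) (h : φ ∈ Dg d) : shf s φ ∈ Dg d := by
  cases d with
  | zero =>
    simp only [Dg, Set.mem_singleton_iff] at h ⊢; subst h; funext v; simp [shf]
  | succ d =>
    have := add_mem_Dg h (Dg_succ (h s))
    convert this using 1
    abel

lemma hom_mem_Dg (e : V →+ ℤ) : (fun v => e v) ∈ Dg (V := V) 1 := by
  intro s
  simp only [Dg, Set.mem_singleton_iff]
  funext v; simp [shf]

lemma hom_mul_mem_Dg (e : V →+ ℤ) {d : ℕ} {φ : V → ℤ} (h : φ ∈ Dg d) :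
    (fun v => e v * φ v) ∈ Dg (V := V) (d + 1) := by
  induction d generalizing φ with
  | zero =>
    simp only [Dg, Set.mem_singleton_iff] at h; subst h
    convert zero_mem_Dg (V := V) 1 using 1
    funext v; simp
  | succ d ih =>
    intro s
    have h1 := ih (h s)
    have h2 := smul_mem_Dg (e s) h
    have h3 := smul_mem_Dg (e s) (Dg_succ (h s))
    have h4 := smul_mem_Dg (φ s) (Dg_mono (show 1 ≤ d + 1 by omega) (hom_mem_Dg e))
    convert add_mem_Dg (add_mem_Dg h1 h2) (add_mem_Dg h3 h4) using 1
    funext v; simp [shf]; ring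

lemma poly_mem_Dg (e : V →+ ℤ) (Q : Polynomial ℤ) :
    ∃ d, (fun v => Q.eval (e v) - Q.eval 0) ∈ Dg (V := V) d := by
  induction Q using Polynomial.induction_on' with
  | add p q hp hq =>
    obtain ⟨d, hd⟩ := hp
    obtain ⟨d', hd'⟩ := hq
    refine ⟨max d d', ?_⟩
    convert add_mem_Dg (Dg_mono (le_max_left d d') hd) (Dg_mono (le_max_right d d') hd') using 1
    funext v; simp; ring
  | monomial n a =>
    have key : ∀ n : ℕ, (fun v => (e v) ^ (n + 1)) ∈ Dg (V := V) (n + 1) := by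
      intro n
      induction n with
      | zero => simpa using hom_mem_Dg e
      | succ n ih =>
        convert hom_mul_mem_Dg e ih using 1
        funext v; ring
    cases n with
    | zero => exact ⟨0, by simp [Dg]; rfl⟩
    | succ n =>
      refine ⟨n + 1, ?_⟩
      convert smul_mem_Dg a (key n) using 1
      funext v; simp

variable {X : Type*} [TopologicalSpace X]

/-- recurrence claim -/
def Claim (T : X ≃ₜ X) (u : ℕ → V) (Φ : Finset (V → ℤ)) : Prop :=
  ∀ U : Set X, IsOpen U → U.Nonempty → ∀ n : ℕ, ∃ H : Finset ℕ, H.Nonempty ∧ (∀ t ∈ H, n < t) ∧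
    ∃ x, ∀ φ ∈ Φ, (T ^ (φ (∑ t ∈ H, u t))) x ∈ U

lemma zpow_add_app (T : X ≃ₜ X) (a b : ℤ) (x : X) : (T ^ (a + b)) x = (T ^ a) ((T ^ b) x) := by
  rw [zpow_add]; rfl

open Classical in
lemma pet_step (T : X ≃ₜ X)
    (hK : ∀ U : Set X, IsOpen U → U.Nonempty → ∃ K : Finset ℤ, ∀ x, ∃ k ∈ K, (T ^ k) x ∈ U)
    (u : ℕ → V) (Φ : Finset (V → ℤ)) (h0 : ∀ φ ∈ Φ, φ 0 = 0)
    (hs : ∀ Ψ : Finset (V → ℤ), (∀ ψ ∈ Ψ, ∃ φ ∈ Φ, ∃ s, ψ = shf s φ) → Claim T u Ψ) :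
    Claim T u (insert 0 Φ) := by
  intro U hU hUne n
  obtain ⟨K, hKU⟩ := hK U hU hUne
  by_contra hcon
  have main : ∀ r : ℕ, ∃ (K' : Finset ℤ) (S : ℤ → Finset ℕ) (W : Set X), K' ⊆ K ∧ K'.card = r ∧
      IsOpen W ∧ W.Nonempty ∧ ∀ k ∈ K', (S k).Nonempty ∧ (∀ t ∈ S k, n < t) ∧
        ∀ x ∈ W, ∀ φ ∈ Φ, (T ^ (k + φ (∑ t ∈ S k, u t))) x ∈ U := by
    intro r
    induction r with
    | zero => exact ⟨∅, fun _ => ∅, U, by simp, by simp, hU, hUne, by simp⟩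
    | succ r ih =>
      obtain ⟨K', S, W, hK', hcard, hW, ⟨x, hx⟩, hS⟩ := ih
      obtain ⟨k, hkK, hk⟩ := hKU x
      by_cases hkK' : k ∈ K'
      · exfalso
        apply hcon
        obtain ⟨h1, h2, h3⟩ := hS k hkK'
        refine ⟨S k, h1, h2, (T ^ k) x, ?_⟩
        intro φ hφ
        rcases Finset.mem_insert.1 hφ with rfl | hφ
        · simpa using hk
        · rw [← zpow_add_app, add_comm]
          exact h3 x hx φ hφ
      · set W1 := W ∩ (T ^ k) ⁻¹' U with hW1
        have hW1o : IsOpen W1 := hW.inter (hU.preimage (T ^ k).continuous)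
        have hW1n : W1.Nonempty := ⟨x, hx, hk⟩
        set Ψ : Finset (V → ℤ) := Φ ∪
          (K' ×ˢ Φ).image (fun q => shf (∑ t ∈ S q.1, u t) q.2) with hΨ
        have hclaim : Claim T u Ψ := by
          apply hs
          intro ψ hψ
          rcases Finset.mem_union.1 hψ with h | h
          · exact ⟨ψ, h, 0, (shf_zero ψ (h0 ψ h)).symm⟩
          · obtain ⟨q, hq, rfl⟩ := Finset.mem_image.1 h
            exact ⟨q.2, (Finset.mem_product.1 hq).2, _, rfl⟩
        obtain ⟨H, hHne, hHn, x', hx'⟩ := hclaim W1 hW1o hW1n (n + (K'.biUnion S).sup id)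
        have hdisj : ∀ k' ∈ K', Disjoint (S k') H := by
          intro k' hk'
          rw [Finset.disjoint_left]
          intro t ht htH
          have h1 := hHn t htH
          have h2 : t ≤ (K'.biUnion S).sup id :=
            Finset.le_sup (f := id) (Finset.mem_biUnion.2 ⟨k', hk', ht⟩)
          omega
        refine ⟨insert k K', fun k' => if k' = k then H else S k' ∪ H,
          ⋂ ψ ∈ Ψ, (T ^ (ψ (∑ t ∈ H, u t))) ⁻¹' W1, ?_, ?_, ?_, ?_, ?_⟩
        · exact Finset.insert_subset hkK hK'
        · rw [Finset.card_insert_of_notMem hkK', hcard]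
        · exact isOpen_biInter_finset fun ψ _ => hW1o.preimage (T ^ _).continuous
        · exact ⟨x', Set.mem_iInter₂.2 hx'⟩
        · intro k' hk'
          rcases Finset.mem_insert.1 hk' with rfl | hk'
          · simp only [if_true]
            refine ⟨hHne, fun t ht => by have := hHn t ht; omega, ?_⟩
            intro y hy φ hφ
            have := Set.mem_iInter₂.1 hy φ (Finset.mem_union_left _ hφ)
            rw [zpow_add_app]
            exact this.2
          · have hne : k' ≠ k := fun h => hkK' (h ▸ hk')
            simp only [if_neg hne]
            obtain ⟨h1, h2, h3⟩ := hS k' hk'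
            refine ⟨h1.mono Finset.subset_union_left, ?_, ?_⟩
            · intro t ht
              rcases Finset.mem_union.1 ht with ht | ht
              · exact h2 t ht
              · have := hHn t ht; omega
            · intro y hy φ hφ
              have := Set.mem_iInter₂.1 hy (shf (∑ t ∈ S k', u t) φ)
                (Finset.mem_union_right _ (Finset.mem_image.2
                  ⟨(k', φ), Finset.mem_product.2 ⟨hk', hφ⟩, rfl⟩))
              have h4 := h3 _ this.1 φ hφ
              rw [← zpow_add_app] at h4
              rw [Finset.sum_union (hdisj k' hk')]
              convert h4 using 3
              simp only [shf]; ring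
  obtain ⟨K', S, W, hK', hc, -⟩ := main (K.card + 1)
  have := Finset.card_le_card hK'
  omega

/-- all finite subsets satisfy the claim -/
def Good (T : X ≃ₜ X) (u : ℕ → V) (Q : Set (V → ℤ)) : Prop :=
  ∀ Φ : Finset (V → ℤ), (∀ φ ∈ Φ, φ ∈ Q) → Claim T u Φ

/-- closure of a family under shifts and lower order perturbation -/
def cls (d : ℕ) (Θ : Set (V → ℤ)) : Set (V → ℤ) :=
  {φ | ∃ θ ∈ Θ, ∃ s, φ - shf s θ ∈ Dg d}

lemma cls_at_zero {d : ℕ} {Θ : Set (V → ℤ)} {φ : V → ℤ} (h : φ ∈ cls d Θ) : φ 0 = 0 := by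
  obtain ⟨θ, _, s, h⟩ := h
  have := Dg_at_zero h
  simpa [shf] using this

lemma cls_shf {d : ℕ} {Θ : Set (V → ℤ)} {φ : V → ℤ} (h : φ ∈ cls d Θ) (t : V) :
    shf t φ ∈ cls d Θ := by
  obtain ⟨θ, hθ, s, h⟩ := h
  refine ⟨θ, hθ, s + t, ?_⟩
  have := shf_mem_Dg t h
  rwa [shf_sub, shf_shf] at this

lemma cls_cls {d : ℕ} {Θ Θ' : Set (V → ℤ)} (h : ∀ θ ∈ Θ', θ ∈ cls (d + 1) Θ)
    {φ : V → ℤ} (hφ : φ ∈ cls d Θ') : φ ∈ cls (d + 1) Θ := by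
  obtain ⟨θ', hθ', s, h1⟩ := hφ
  obtain ⟨θ, hθ, t, h2⟩ := h θ' hθ'
  refine ⟨θ, hθ, t + s, ?_⟩
  have h3 := shf_mem_Dg s h2
  rw [shf_sub, shf_shf] at h3
  have := add_mem_Dg (Dg_succ h1) h3
  convert this using 1
  abel

open Classical in
lemma claim_translate (T : X ≃ₜ X) (u : ℕ → V) (Φ : Finset (V → ℤ)) (h : V → ℤ)
    (hc : Claim T u (Φ.image (fun φ => φ - h))) : Claim T u Φ := by
  intro U hU hne n
  obtain ⟨H, h1, h2, x, hx⟩ := hc U hU hne n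
  refine ⟨H, h1, h2, (T ^ (- h (∑ t ∈ H, u t))) x, ?_⟩
  intro φ hφ
  rw [← zpow_add_app]
  have := hx _ (Finset.mem_image_of_mem _ hφ)
  simpa [sub_eq_add_neg] using this

open Classical in
lemma pet_level (T : X ≃ₜ X)
    (hK : ∀ U : Set X, IsOpen U → U.Nonempty → ∃ K : Finset ℤ, ∀ x, ∃ k ∈ K, (T ^ k) x ∈ U)
    (u : ℕ → V) (d : ℕ) : ∀ Θ : Set (V → ℤ), Good T u (cls d Θ) → Good T u (cls d (insert 0 Θ)) := by
  induction d with
  | zero =>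
    intro Θ hG Φ hΦ
    have hsh : ∀ s : V, shf s (0 : V → ℤ) = 0 := by intro s; funext v; simp [shf]
    have h1 : ∀ φ ∈ Φ.erase 0, φ ∈ cls 0 Θ := by
      intro φ hφ
      obtain ⟨hne, hφ⟩ := Finset.mem_erase.1 hφ
      obtain ⟨θ, hθ, s, h⟩ := hΦ φ hφ
      rcases hθ with rfl | hθ
      · exfalso; apply hne
        simpa [Dg, hsh] using h
      · exact ⟨θ, hθ, s, h⟩
    have := pet_step T hK u (Φ.erase 0) (fun φ hφ => cls_at_zero (h1 φ hφ)) (by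
      intro Ψ hΨ
      apply hG
      intro ψ hψ
      obtain ⟨φ, hφ, s, rfl⟩ := hΨ ψ hψ
      exact cls_shf (h1 φ hφ) s)
    intro U hU hne n
    obtain ⟨H, h1, h2, x, hx⟩ := this U hU hne n
    refine ⟨H, h1, h2, x, fun φ hφ => hx φ ?_⟩
    by_cases h : φ = 0
    · simp [h]
    · exact Finset.mem_insert_of_mem (Finset.mem_erase.2 ⟨h, hφ⟩)
  | succ d ihd =>
    intro Θ hG
    have inner : ∀ (c : ℕ) (L : List (V → ℤ)), L.length = c → (∀ h ∈ L, h ∈ Dg (d + 1)) →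
        ∀ Θ' : Set (V → ℤ), (∀ θ ∈ Θ', θ ∈ cls (d + 1) Θ) →
        Good T u (cls d (Θ' ∪ {h | h ∈ L})) := by
      intro c
      induction c with
      | zero =>
        intro L hL _ Θ' hΘ' Φ hΦ
        apply hG
        intro φ hφ
        apply cls_cls hΘ'
        have := hΦ φ hφ
        rw [List.length_eq_zero_iff] at hL
        subst hL
        simpa using this
      | succ c ihc =>
        intro L hL hLD Θ' hΘ' Φ hΦ
        obtain ⟨h, L, rfl⟩ : ∃ h L', L = h :: L' := by
          cases L with
          | nil => simp at hL
          | cons h L' => exact ⟨h, L', rfl⟩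
        have hh : h ∈ Dg (d + 1) := hLD h (by simp)
        apply claim_translate T u Φ h
        have hgood := ihd _ (ihc (L.map (fun g => g - h)) (by simpa using hL) (by
          intro g hg
          obtain ⟨g', hg', rfl⟩ := List.mem_map.1 hg
          exact sub_mem_Dg (hLD g' (by simp [hg'])) hh)
          (Set.image (fun g => g - h) Θ') (by
            rintro _ ⟨g, hg, rfl⟩
            obtain ⟨θ, hθ, s, h1⟩ := hΘ' g hg
            refine ⟨θ, hθ, s, ?_⟩
            convert sub_mem_Dg h1 hh using 1
            exact sub_right_comm _ _ _))
        apply hgood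
        intro φ' hφ'
        obtain ⟨φ, hφ, rfl⟩ := Finset.mem_image.1 hφ'
        obtain ⟨θ, hθ, s, h1⟩ := hΦ φ hφ
        refine ⟨θ - h, ?_, s, ?_⟩
        · rcases hθ with hθ | hθ
          · right; left; exact ⟨θ, hθ, rfl⟩
          · rcases List.mem_cons.1 hθ with rfl | hθ
            · left; simp
            · right; right; exact List.mem_map.2 ⟨θ, hθ, rfl⟩
        · rw [shf_sub]
          convert add_mem_Dg h1 (hh s) using 1
          abel
    intro Φ hΦ
    refine inner _ (Φ.filter (fun φ => φ ∈ Dg (d + 1))).toList rfl (by simp)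
      {φ | φ ∈ cls (d + 1) Θ} (fun _ h => h) Φ ?_
    intro φ hφ
    have hz := cls_at_zero (hΦ φ hφ)
    refine ⟨φ, ?_, 0, ?_⟩
    · obtain ⟨θ, hθ, s, h1⟩ := hΦ φ hφ
      rcases hθ with rfl | hθ
      · right
        have : shf s (0 : V → ℤ) = 0 := by funext v; simp [shf]
        rw [this, sub_zero] at h1
        simp [hφ, h1]
      · left; exact ⟨θ, hθ, s, h1⟩
    · rw [shf_zero _ hz, sub_self]; exact zero_mem_Dg _

theorem poly_recurrence [Nonempty X] (T : X ≃ₜ X)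
    (hK : ∀ U : Set X, IsOpen U → U.Nonempty → ∃ K : Finset ℤ, ∀ x, ∃ k ∈ K, (T ^ k) x ∈ U)
    (u : ℕ → V) (d : ℕ) (Φ : Finset (V → ℤ)) (hΦ : ∀ φ ∈ Φ, φ ∈ Dg d) : Claim T u Φ := by
  apply pet_level T hK u d ∅
  · intro Φ hΦ U hU hne n
    refine ⟨{n + 1}, by simp, by simp, Classical.arbitrary X, ?_⟩
    intro φ hφ
    obtain ⟨θ, hθ, _⟩ := hΦ φ hφ
    exact hθ.elim
  · intro φ hφ
    refine ⟨0, by simp, 0, ?_⟩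
    rw [shf_zero _ rfl, sub_zero]
    exact hΦ φ hφ

end pet

section uf

lemma mem_uAdd (p q : Ultrafilter ℕ) (A : Set ℕ) :
    A ∈ uAdd p q ↔ {x | {y | x + y ∈ A} ∈ q} ∈ p := Iff.rfl

lemma uAdd_assoc (p q r : Ultrafilter ℕ) : uAdd (uAdd p q) r = uAdd p (uAdd q r) := by
  apply Ultrafilter.ext
  intro A
  simp only [mem_uAdd, Set.mem_ofPred_eq, add_assoc]

lemma uAdd_pure_comm (k : ℕ) (q : Ultrafilter ℕ) : uAdd (pure k) q = uAdd q (pure k) := by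
  apply Ultrafilter.ext
  intro A
  simp only [mem_uAdd, Ultrafilter.mem_pure, Set.mem_ofPred_eq, add_comm]

lemma mem_pure_uAdd (k : ℕ) (q : Ultrafilter ℕ) (A : Set ℕ) :
    A ∈ uAdd (pure k) q ↔ {y | k + y ∈ A} ∈ q := Iff.rfl

lemma uAdd_continuous (q : Ultrafilter ℕ) : Continuous (fun p => uAdd p q) :=
  ultrafilterBasis_is_basis.continuous_iff.2 <| Set.forall_mem_range.mpr fun s ↦
    ultrafilter_isOpen_basic { m : ℕ | {y | m + y ∈ s} ∈ q }

/-- nonempty closed left ideals -/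
def IsCLI (L : Set (Ultrafilter ℕ)) : Prop :=
  IsClosed L ∧ L.Nonempty ∧ ∀ q ∈ L, ∀ r, uAdd r q ∈ L

lemma isCLI_range (q : Ultrafilter ℕ) : IsCLI (Set.range (fun r => uAdd r q)) := by
  refine ⟨(isCompact_range (uAdd_continuous q)).isClosed, ⟨_, q, rfl⟩, ?_⟩
  rintro _ ⟨s, rfl⟩ r
  exact ⟨uAdd r s, uAdd_assoc _ _ _⟩

lemma exists_minimal_CLI (L₀ : Set (Ultrafilter ℕ)) (h : IsCLI L₀) :
    ∃ L ⊆ L₀, IsCLI L ∧ ∀ M ⊆ L, IsCLI M → M = L := by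
  have := zorn_superset_nonempty {L | IsCLI L} (by
    intro c hc hchain hne
    refine ⟨⋂₀ c, ⟨isClosed_sInter fun s hs => (hc hs).1, ?_, ?_⟩,
      fun s hs => Set.sInter_subset_of_mem hs⟩
    · have : Nonempty c := hne.to_subtype
      rw [Set.sInter_eq_iInter]
      apply IsCompact.nonempty_iInter_of_directed_nonempty_isCompact_isClosed
      · intro a b
        rcases hchain.total a.2 b.2 with h | h
        · exact ⟨a, le_rfl, h⟩
        · exact ⟨b, h, le_rfl⟩
      · exact fun i => (hc i.2).2.1
      · exact fun i => (hc i.2).1.isCompact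
      · exact fun i => (hc i.2).1
    · intro q hq r s hs
      exact (hc hs).2.2 q (hq s hs) r) L₀ h
  obtain ⟨L, hL, hmin⟩ := this
  refine ⟨L, hL, hmin.prop, ?_⟩
  intro M hM hMC
  exact Set.Subset.antisymm hM (hmin.le_of_le hMC hM)

lemma exists_idem_in (L : Set (Ultrafilter ℕ)) (h : IsCLI L) : ∃ e ∈ L, uAdd e e = e :=
  @exists_idempotent_in_compact_add_subsemigroup (Ultrafilter ℕ) Ultrafilter.addSemigroup _ _
    uAdd_continuous L h.2.1 h.1.isCompact (fun x _ y hy => h.2.2 y hy x)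

lemma minimal_mem_CLI (p : Ultrafilter ℕ) (hp : IsMinimalIdempotent p) :
    ∃ L, p ∈ L ∧ IsCLI L ∧ ∀ M ⊆ L, IsCLI M → M = L := by
  obtain ⟨L, hL, hC, hmin⟩ := exists_minimal_CLI _ (isCLI_range p)
  obtain ⟨e, heL, he⟩ := exists_idem_in L hC
  obtain ⟨hp1, hp2⟩ := hp
  have hp1' : uAdd p p = p := hp1
  have hep : uAdd e p = e := by
    obtain ⟨r, hr⟩ := hL heL
    simp only at hr
    rw [← hr, uAdd_assoc, hp1']
  have hq : uAdd p e = p := by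
    apply hp2
    · show uAdd (uAdd p e) (uAdd p e) = uAdd p e
      rw [uAdd_assoc, ← uAdd_assoc e p e, hep, he]
    · rw [uAdd_assoc, hep]
    · rw [← uAdd_assoc, hp1']
  exact ⟨L, hq ▸ hC.2.2 e heL p, hC, hmin⟩

lemma poly_J (p : Ultrafilter ℕ) (hp : IsMinimalIdempotent p) (B : Set ℕ) (hB : B ∈ p)
    {V : Type} [AddCommMonoid V] (u : ℕ → V)
    (Φ : Finset (V → ℕ)) (hΦ : ∀ φ ∈ Φ, ∃ d, (fun v => (φ v : ℤ)) ∈ Dg (V := V) d) (n : ℕ) :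
    ∃ (a : ℕ) (H : Finset ℕ), H.Nonempty ∧ (∀ t ∈ H, n < t) ∧
      ∀ φ ∈ Φ, a + φ (∑ t ∈ H, u t) ∈ B := by
  classical
  obtain ⟨L, hpL, hC, hmin⟩ := minimal_mem_CLI p hp
  have hinj : ∀ q r : Ultrafilter ℕ, uAdd (pure 1) q = uAdd (pure 1) r → q = r := by
    intro q r h
    apply Ultrafilter.ext
    intro A
    have h1 : ∀ q : Ultrafilter ℕ, A ∈ q ↔ ((fun x => 1 + x) '' A) ∈ uAdd (pure 1) q := by
      intro q
      rw [mem_pure_uAdd]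
      have : {y | 1 + y ∈ (fun x => 1 + x) '' A} = A := by
        ext y; simp
      rw [this]
    rw [h1 q, h1 r, h]
  have hcont : Continuous (fun q => uAdd (pure 1) q) := by
    have : (fun q => uAdd (pure 1) q) = fun q => uAdd q (pure 1) := by
      funext q; exact uAdd_pure_comm 1 q
    rw [this]; exact uAdd_continuous _
  have himg : (fun q => uAdd (pure 1) q) '' L = L := by
    apply hmin
    · rintro _ ⟨q, hq, rfl⟩; exact hC.2.2 q hq _
    · refine ⟨(hC.1.isCompact.image hcont).isClosed, hC.2.1.image _, ?_⟩
      rintro _ ⟨q, hq, rfl⟩ r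
      refine ⟨uAdd r q, hC.2.2 q hq r, ?_⟩
      simp only
      rw [← uAdd_assoc, uAdd_pure_comm 1 r, uAdd_assoc]
  have : CompactSpace L := isCompact_iff_compactSpace.1 hC.1.isCompact
  let f : L → L := fun q => ⟨uAdd (pure 1) q.1, hC.2.2 q.1 q.2 _⟩
  have hf : Continuous f := (hcont.comp continuous_subtype_val).subtype_mk _
  have hbij : Function.Bijective f := by
    constructor
    · intro q r h
      exact Subtype.ext (hinj _ _ (congrArg Subtype.val h))
    · rintro ⟨q, hq⟩
      rw [← himg] at hq
      obtain ⟨r, hr, hrq⟩ := hq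
      exact ⟨⟨r, hr⟩, Subtype.ext hrq⟩
  let T : L ≃ₜ L := Continuous.homeoOfEquivCompactToT2 (f := Equiv.ofBijective f hbij) hf
  have hT1 : ∀ x : L, (T x).1 = uAdd (pure 1) x.1 := fun x => rfl
  have hTk : ∀ (k : ℕ) (x : L), ((T ^ (k : ℤ)) x).1 = uAdd (pure k) x.1 := by
    intro k
    induction k with
    | zero =>
      intro x
      apply Ultrafilter.ext
      intro A
      rw [mem_pure_uAdd]
      simp
    | succ k ih =>
      intro x
      rw [Nat.cast_succ, zpow_add_app, ih, zpow_one, hT1]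
      apply Ultrafilter.ext
      intro A
      simp only [mem_pure_uAdd, Set.mem_ofPred_eq, add_assoc]
  have horb : ∀ (x : L) (U : Set L), IsOpen U → U.Nonempty → ∃ k : ℕ, (T ^ (k : ℤ)) x ∈ U := by
    intro x U hU hne
    have hr : Set.range (fun r => uAdd r x.1) = L := by
      apply hmin _ _ (isCLI_range _)
      rintro _ ⟨r, rfl⟩
      exact hC.2.2 _ x.2 r
    obtain ⟨U', hU', rfl⟩ := isOpen_induced_iff.1 hU
    obtain ⟨y, hy⟩ := hne
    obtain ⟨r, hry⟩ : y.1 ∈ Set.range (fun r => uAdd r x.1) := by rw [hr]; exact y.2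
    simp only at hry
    obtain ⟨_, ⟨D, rfl⟩, hyD, hDU⟩ := ultrafilterBasis_is_basis.exists_subset_of_mem_open hy hU'
    have hD : D ∈ y.1 := hyD
    rw [← hry, mem_uAdd] at hD
    obtain ⟨k, hk⟩ := r.nonempty_of_mem hD
    refine ⟨k, hDU ?_⟩
    show D ∈ ((T ^ (k : ℤ)) x).1
    rw [hTk]
    exact hk
  have hK : ∀ U : Set L, IsOpen U → U.Nonempty → ∃ K : Finset ℤ, ∀ x, ∃ k ∈ K, (T ^ k) x ∈ U := by
    intro U hU hne
    obtain ⟨K, hK⟩ := isCompact_univ.elim_finite_subcover (fun k : ℤ => (T ^ k) ⁻¹' U)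
      (fun k => hU.preimage (T ^ k).continuous) (by
        intro x _
        obtain ⟨k, hk⟩ := horb x U hU hne
        exact Set.mem_iUnion.2 ⟨k, hk⟩)
    refine ⟨K, fun x => ?_⟩
    have := hK (Set.mem_univ x)
    simpa using this
  have : Nonempty L := ⟨⟨p, hpL⟩⟩
  have hd : ∃ d, ∀ φ ∈ Φ, (fun v => (φ v : ℤ)) ∈ Dg (V := V) d := by
    choose! d hd using hΦ
    exact ⟨Φ.sup d, fun φ hφ => Dg_mono (Finset.le_sup hφ) (hd φ hφ)⟩
  obtain ⟨d, hd⟩ := hd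
  obtain ⟨H, hH, hHn, x, hx⟩ := poly_recurrence T hK u d
    (Φ.image (fun φ v => (φ v : ℤ))) (by
      intro φ hφ
      obtain ⟨φ, h, rfl⟩ := Finset.mem_image.1 hφ
      exact hd φ h)
    {q : L | B ∈ q.1} ((ultrafilter_isOpen_basic B).preimage continuous_subtype_val)
    ⟨⟨p, hpL⟩, hB⟩ n
  have hall : (⋂ φ ∈ Φ, {y | φ (∑ t ∈ H, u t) + y ∈ B}) ∈ x.1 := by
    have : (⋂ φ ∈ Φ, {y | φ (∑ t ∈ H, u t) + y ∈ B}) ∈ (x.1 : Filter ℕ) := by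
      rw [Filter.biInter_finset_mem]
      intro φ hφ
      have := hx _ (Finset.mem_image_of_mem _ hφ)
      have h2 : B ∈ ((T ^ ((φ (∑ t ∈ H, u t) : ℕ) : ℤ)) x).1 := this
      rw [hTk] at h2
      exact h2
    exact this
  obtain ⟨a, ha⟩ := x.1.nonempty_of_mem hall
  refine ⟨a, H, hH, hHn, fun φ hφ => ?_⟩
  have := Set.mem_iInter₂.1 ha φ hφ
  rw [add_comm]; exact this

/-- star operation -/
def star (p : Ultrafilter ℕ) (D : Set ℕ) : Set ℕ := {x | x ∈ D ∧ {y | x + y ∈ D} ∈ p}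

lemma star_mem {p : Ultrafilter ℕ} (hp : uAdd p p = p) {D : Set ℕ} (hD : D ∈ p) :
    star p D ∈ p := by
  have h : D ∈ uAdd p p := by rw [hp]; exact hD
  exact Filter.inter_mem (f := (p : Filter ℕ)) hD h

lemma star_shift {p : Ultrafilter ℕ} (hp : uAdd p p = p) {D : Set ℕ} {x : ℕ}
    (hx : x ∈ star p D) : {n | x + n ∈ star p D} ∈ p := by
  have h := star_mem hp hx.2
  refine Filter.mem_of_superset (f := p.1) h ?_
  intro n hn
  refine ⟨hn.1, ?_⟩
  simpa only [Set.mem_ofPred_eq, add_assoc] using hn.2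

end uf

section tree

/-- the sum ultrafilter indexed by a natural number of coefficients -/
def qN (p : Ultrafilter ℕ) : ℕ → (ℕ → ℕ) → Ultrafilter ℕ
  | 0, _ => pure 0
  | k + 1, a => uAdd (p.map fun x => a 0 * x) (qN p k fun i => a (i + 1))

lemma linComb_eq (p : Ultrafilter ℕ) (m : ℕ) (a : ℕ → ℕ) :
    linComb m (fun i : Fin m => a i) (fun _ => p) = qN p m a := by
  induction m generalizing a with
  | zero => rfl
  | succ m ih =>
    have := ih (fun i => a (i + 1))
    simp only [linComb, qN, ← this]
    rfl

/-- states -/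
structure St where
  /-- number of remaining blocks -/
  k : ℕ
  /-- coefficients -/
  a : ℕ → ℕ
  /-- target -/
  A : Set ℕ
  /-- sum of the alphas -/
  x : ℕ
  /-- sum of the values -/
  y : ℕ
  /-- polynomial -/
  P : ℕ → ℕ

/-- value of the current block -/
def St.val (τ : St) : ℕ := τ.x + τ.P τ.y

/-- target set of the current block -/
def St.D (p : Ultrafilter ℕ) (τ : St) : Set ℕ :=
  {v | {w | τ.a 0 * v + w ∈ τ.A} ∈ qN p τ.k (fun i => τ.a (i + 1))}

/-- extension of the current block -/
def St.ext (τ : St) (α h : ℕ) : St := ⟨τ.k, τ.a, τ.A, τ.x + α, τ.y + h, τ.P⟩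

/-- start of the next block -/
def St.nxt (τ : St) (P : ℕ → ℕ) : St :=
  ⟨τ.k - 1, fun i => τ.a (i + 1), {w | τ.a 0 * τ.val + w ∈ τ.A}, 0, 0, P⟩

/-- validity -/
def St.Valid (p : Ultrafilter ℕ) (τ : St) : Prop :=
  {n | τ.val + n ∈ star p (τ.D p)} ∈ p ∧ IsPolyZeroConst τ.P

lemma poly_zero {P : ℕ → ℕ} (h : IsPolyZeroConst P) : P 0 = 0 := by
  obtain ⟨Q, h0, hQ⟩ := h
  rw [hQ, ← Polynomial.coeff_zero_eq_eval_zero, h0]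

lemma poly_mono {P : ℕ → ℕ} (h : IsPolyZeroConst P) : Monotone P := by
  obtain ⟨Q, h0, hQ⟩ := h
  intro x y hxy
  rw [hQ, hQ, Polynomial.eval_eq_sum, Polynomial.eval_eq_sum]
  apply Finset.sum_le_sum
  intro i _
  exact Nat.mul_le_mul_left _ (Nat.pow_le_pow_left hxy i)

lemma valid_start {p : Ultrafilter ℕ} (hp : uAdd p p = p) (k : ℕ) (a : ℕ → ℕ) (A : Set ℕ)
    (P : ℕ → ℕ) (hP : IsPolyZeroConst P) (hA : A ∈ qN p (k + 1) a) :
    (St.mk k a A 0 0 P).Valid p := by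
  refine ⟨?_, hP⟩
  have hD : (St.mk k a A 0 0 P).D p ∈ p := hA
  have := star_mem hp hD
  simpa [St.val, poly_zero hP] using this

lemma valid_ext {p : Ultrafilter ℕ} (hp : uAdd p p = p) (τ : St) (hτ : τ.Valid p) (α h : ℕ)
    (hv : (τ.ext α h).val ∈ star p (τ.D p)) : (τ.ext α h).Valid p :=
  ⟨star_shift hp hv, hτ.2⟩

lemma valid_nxt {p : Ultrafilter ℕ} (hp : uAdd p p = p) (τ : St) (hk : τ.k ≠ 0)
    (hv : τ.val ∈ star p (τ.D p)) (P : ℕ → ℕ) (hP : IsPolyZeroConst P) :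
    (τ.nxt P).Valid p := by
  obtain ⟨k, a, A, x, y, Q⟩ := τ
  obtain ⟨k, rfl⟩ := Nat.exists_eq_succ_of_ne_zero hk
  exact valid_start hp k _ _ P hP hv.1

lemma wf_choice {ι Y : Type*} {r : ι → ι → Prop} (hr : WellFounded r)
    (Rel : ∀ x, (∀ y, r y x → Y) → Y → Prop) (h : ∀ x g, ∃ v, Rel x g v) :
    ∃ g : ι → Y, ∀ x, Rel x (fun y _ => g y) (g x) := by
  choose c hc using h
  refine ⟨hr.fix c, fun x => ?_⟩
  have := hc x (fun y _ => hr.fix c y)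
  rw [hr.fix_eq]
  exact this

/-- data attached to a finite set of functions -/
structure Dat (p : Ultrafilter ℕ) where
  /-- alpha -/
  α : ℕ
  /-- the finite set -/
  H : Finset ℕ
  /-- the states -/
  R : Set St
  hH : H.Nonempty
  hR : R.Finite
  hV : ∀ τ ∈ R, τ.Valid p

/-- the pre-states -/
def Pre {p : Ultrafilter ℕ} (I : Set St) (F : Finset (ℕ → ℕ)) (g : ∀ F', F' ⊂ F → Dat p) : Set St :=
  I ∪ {τ | ∃ F', ∃ h : F' ⊂ F, τ ∈ (g F' h).R}

/-- compatibility -/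
def Rel {p : Ultrafilter ℕ} (I : Set St) (T : Finset (ℕ → ℕ)) (F : Finset (ℕ → ℕ))
    (g : ∀ F', F' ⊂ F → Dat p) (Y : Dat p) : Prop :=
  (∀ F', ∀ h : F' ⊂ F, ∀ s ∈ (g F' h).H, ∀ t ∈ Y.H, s < t) ∧
  ∀ τ ∈ Pre I F g, ∀ f ∈ F,
    (τ.ext Y.α (∑ t ∈ Y.H, f t)).val ∈ star p (τ.D p) ∧
    τ.ext Y.α (∑ t ∈ Y.H, f t) ∈ Y.R ∧
    (τ.k ≠ 0 → ∀ P ∈ T, (τ.ext Y.α (∑ t ∈ Y.H, f t)).nxt P ∈ Y.R)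

lemma shifted_poly {P : ℕ → ℕ} (hP : IsPolyZeroConst P) (y : ℕ) (f : ℕ → ℕ) :
    ∃ d, (fun v : (ℕ → ℕ) → ℕ => ((P (y + v f) - P y : ℕ) : ℤ)) ∈ Dg (V := (ℕ → ℕ) → ℕ) d := by
  have hm := poly_mono hP
  obtain ⟨Q, h0, hQ⟩ := hP
  let e : ((ℕ → ℕ) → ℕ) →+ ℤ := (Nat.castAddMonoidHom ℤ).comp (Pi.evalAddMonoidHom _ f)
  obtain ⟨d, hd⟩ := poly_mem_Dg e
    ((Q.map (Nat.castRingHom ℤ)).comp (Polynomial.C (y : ℤ) + Polynomial.X))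
  refine ⟨d, ?_⟩
  convert hd using 1
  funext v
  have hcast : ∀ z : ℕ, ((P z : ℕ) : ℤ) = (Q.map (Nat.castRingHom ℤ)).eval (z : ℤ) := by
    intro z
    rw [hQ]
    simp
  rw [Nat.cast_sub (hm (Nat.le_add_right _ _)), hcast, hcast]
  simp [e]

lemma rel_exists {p : Ultrafilter ℕ} (hp : IsMinimalIdempotent p) (I : Set St) (hI : I.Finite)
    (hIV : ∀ τ ∈ I, τ.Valid p) (T : Finset (ℕ → ℕ)) (hT : ∀ P ∈ T, IsPolyZeroConst P)
    (F : Finset (ℕ → ℕ)) (g : ∀ F', F' ⊂ F → Dat p) : ∃ Y, Rel I T F g Y := by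
  classical
  have hidem : uAdd p p = p := hp.1
  have hsub : {F' : Finset (ℕ → ℕ) | F' ⊂ F}.Finite :=
    F.powerset.finite_toSet.subset (fun F' h => by simpa using (show F' ⊂ F from h).1)
  have hPf : (Pre I F g).Finite := by
    apply hI.union
    have := hsub.biUnion' (t := fun F' h => (g F' h).R) (fun F' h => (g F' h).hR)
    refine this.subset ?_
    rintro τ ⟨F', h, hτ⟩
    exact Set.mem_iUnion₂.2 ⟨F', h, hτ⟩
  have hPV : ∀ τ ∈ Pre I F g, τ.Valid p := by
    rintro τ (h | ⟨F', h, hτ⟩)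
    · exact hIV τ h
    · exact (g F' h).hV τ hτ
  have hHf : ∃ n, ∀ F', ∀ h : F' ⊂ F, ∀ s ∈ (g F' h).H, s ≤ n := by
    have := hsub.biUnion' (t := fun F' h => ((g F' h).H : Set ℕ))
      (fun F' h => (g F' h).H.finite_toSet)
    obtain ⟨n, hn⟩ := this.bddAbove
    exact ⟨n, fun F' h s hs => hn (Set.mem_iUnion₂.2 ⟨F', h, hs⟩)⟩
  obtain ⟨n, hn⟩ := hHf
  have hC : (⋂ τ ∈ Pre I F g, {n | τ.val + n ∈ star p (τ.D p)}) ∈ p := by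
    have : (⋂ τ ∈ Pre I F g, {n | τ.val + n ∈ star p (τ.D p)}) ∈ (p : Filter ℕ) := by
      rw [Filter.biInter_mem hPf]
      exact fun τ hτ => (hPV τ hτ).1
    exact this
  obtain ⟨α, H, hH, hHn, hα⟩ := poly_J p hp _ hC (V := (ℕ → ℕ) → ℕ) (fun t f => f t)
    ((hPf.toFinset ×ˢ F).image (fun q v => q.1.P (q.1.y + v q.2) - q.1.P q.1.y)) (by
      intro φ hφ
      obtain ⟨q, hq, rfl⟩ := Finset.mem_image.1 hφ
      have h1 := (Finset.mem_product.1 hq).1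
      exact shifted_poly (hPV q.1 (by simpa using h1)).2 _ _) n
  have key : ∀ τ ∈ Pre I F g, ∀ f ∈ F, (τ.ext α (∑ t ∈ H, f t)).val ∈ star p (τ.D p) := by
    intro τ hτ f hf
    have := hα _ (Finset.mem_image.2 ⟨(τ, f), Finset.mem_product.2 ⟨by simpa using hτ, hf⟩, rfl⟩)
    have := Set.mem_iInter₂.1 this τ hτ
    simp only [Finset.sum_apply, Set.mem_ofPred_eq] at this
    convert this using 1
    have hm := poly_mono (hPV τ hτ).2 (Nat.le_add_right τ.y (∑ t ∈ H, f t))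
    simp only [St.val, St.ext]
    omega
  let R1 : Set St := (fun q : St × (ℕ → ℕ) => q.1.ext α (∑ t ∈ H, q.2 t)) '' (Pre I F g ×ˢ F)
  let R2 : Set St := (fun q : (St × (ℕ → ℕ)) × (ℕ → ℕ) =>
    (q.1.1.ext α (∑ t ∈ H, q.1.2 t)).nxt q.2) '' ((({τ ∈ Pre I F g | τ.k ≠ 0}) ×ˢ F) ×ˢ T)
  have hPk : {τ ∈ Pre I F g | τ.k ≠ 0}.Finite := hPf.subset (fun τ h => h.1)
  refine ⟨⟨α, H, R1 ∪ R2, hH, ?_, ?_⟩, ?_, ?_⟩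
  · exact ((hPf.prod F.finite_toSet).image _).union
      (((hPk.prod F.finite_toSet).prod T.finite_toSet).image _)
  · rintro _ (⟨⟨τ, f⟩, ⟨h1, h2⟩, rfl⟩ | ⟨⟨⟨τ, f⟩, P⟩, ⟨⟨⟨h1, hk⟩, h2⟩, h3⟩, rfl⟩)
    · exact valid_ext hidem τ (hPV τ h1) _ _ (key τ h1 f h2)
    · exact valid_nxt hidem (τ.ext α (∑ t ∈ H, f t)) hk (key τ h1 f h2) P (hT P h3)
  · intro F' h s hs t ht
    exact lt_of_le_of_lt (hn F' h s hs) (hHn t ht)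
  · intro τ hτ f hf
    refine ⟨key τ hτ f hf, Or.inl ⟨(τ, f), ⟨hτ, hf⟩, rfl⟩, ?_⟩
    intro hk P hP
    exact Or.inr ⟨((τ, f), P), ⟨⟨⟨hτ, hk⟩, hf⟩, hP⟩, rfl⟩

lemma block_ext {p : Ultrafilter ℕ} {I : Set St} {T : Finset (ℕ → ℕ)}
    {Y : Finset (ℕ → ℕ) → Dat p} (hY : ∀ F, Rel I T F (fun F' _ => Y F') (Y F))
    {G : ℕ → Finset (ℕ → ℕ)} (hG : ∀ i j, i < j → G i ⊂ G j)
    {f : ℕ → ℕ → ℕ} (hf : ∀ i, f i ∈ G i)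
    (τ : St) (N : ℕ) (hτ : ∀ i, N ≤ i → τ ∈ Pre I (G i) (fun F' _ => Y F'))
    (β : Finset ℕ) : β.Nonempty → (∀ i ∈ β, N ≤ i) → ∃ b ∈ β, ∃ τ' : St,
      τ' = τ.ext (∑ i ∈ β, (Y (G i)).α) (∑ i ∈ β, ∑ t ∈ (Y (G i)).H, f i t) ∧
      τ'.val ∈ star p (τ.D p) ∧ τ' ∈ (Y (G b)).R ∧
      (τ.k ≠ 0 → ∀ P ∈ T, τ'.nxt P ∈ (Y (G b)).R) := by
  induction β using Finset.induction_on_max with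
  | empty => intro h; simp at h
  | insert b β hb ih =>
    intro _ hN
    have hbn : b ∉ β := fun h => lt_irrefl _ (hb b h)
    refine ⟨b, Finset.mem_insert_self _ _, _, rfl, ?_⟩
    rw [Finset.sum_insert hbn, Finset.sum_insert hbn]
    rcases β.eq_empty_or_nonempty with rfl | hne
    · simpa using (hY (G b)).2 τ (hτ b (hN b (by simp))) (f b) (hf b)
    · obtain ⟨b', hb', τ', rfl, h1, h2, h3⟩ := ih hne
        (fun i hi => hN i (Finset.mem_insert_of_mem hi))
      have := (hY (G b)).2 _ (Or.inr ⟨G b', hG _ _ (hb b' hb'), h2⟩) (f b) (hf b)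
      have he : ∀ x y x' y' : ℕ, (τ.ext x y).ext x' y' = τ.ext (x' + x) (y' + y) := by
        intro x y x' y'
        simp only [St.ext, St.mk.injEq, true_and, and_true]
        omega
      rw [he] at this
      exact this

lemma final {p : Ultrafilter ℕ} {I : Set St} {T : Finset (ℕ → ℕ)}
    {Y : Finset (ℕ → ℕ) → Dat p} (hY : ∀ F, Rel I T F (fun F' _ => Y F') (Y F))
    {G : ℕ → Finset (ℕ → ℕ)} (hG : ∀ i j, i < j → G i ⊂ G j)
    {f : ℕ → ℕ → ℕ} (hf : ∀ i, f i ∈ G i) (k : ℕ) :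
    ∀ (a : ℕ → ℕ) (A : Set ℕ) (N : ℕ) (P : ℕ → ℕ → ℕ) (β : ℕ → Finset ℕ),
      (∀ l, P l ∈ T) →
      (∀ Q ∈ T, ∀ i, N ≤ i → St.mk k a A 0 0 Q ∈ Pre I (G i) (fun F' _ => Y F')) →
      (∀ l < k + 1, (β l).Nonempty) → (∀ l < k + 1, ∀ i ∈ β l, N ≤ i) →
      (∀ l l', l < l' → l' < k + 1 → ∀ x ∈ β l, ∀ y ∈ β l', x < y) →
      ∑ l ∈ Finset.range (k + 1), a l * ((∑ i ∈ β l, (Y (G i)).α) +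
        P l (∑ i ∈ β l, ∑ t ∈ (Y (G i)).H, f i t)) ∈ A := by
  induction k with
  | zero =>
    intro a A N P β hP hpre hne hN hord
    obtain ⟨b, hb, τ', rfl, h1, -⟩ := block_ext hY hG hf _ N (hpre (P 0) (hP 0)) (β 0)
      (hne 0 (by omega)) (hN 0 (by omega))
    have h2 := h1.1
    simp only [St.D, St.val, St.ext, qN] at h2
    simpa using h2
  | succ k ih =>
    intro a A N P β hP hpre hne hN hord
    obtain ⟨b, hb, τ', hτ', h1, -, h3⟩ := block_ext hY hG hf _ N (hpre (P 0) (hP 0)) (β 0)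
      (hne 0 (by omega)) (hN 0 (by omega))
    have := ih (fun i => a (i + 1)) {w | a 0 * τ'.val + w ∈ A} (b + 1) (fun l => P (l + 1))
      (fun l => β (l + 1)) (fun l => hP _) (by
        intro Q hQ i hi
        have := h3 (by simp) Q hQ
        refine Or.inr ⟨G b, hG _ _ (by omega), ?_⟩
        subst hτ'
        exact this)
      (fun l hl => hne _ (by omega))
      (fun l hl i hi => hord 0 (l + 1) (by omega) (by omega) b hb i hi)
      (fun l l' hll hl x hx y hy => hord (l + 1) (l' + 1) (by omega) (by omega) x hx y hy)
    rw [Finset.sum_range_succ', add_comm]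
    subst hτ'
    simp only [Set.mem_ofPred_eq, St.val, St.ext, zero_add] at this
    exact this

end tree

/-- Polynomial extension of the linear-combination central sets theorem, single minimal
idempotent. -/
theorem linear_comb_polynomial_CST_I (m : ℕ) (hm : 1 ≤ m) (a : Fin m → ℕ)
    (p : Ultrafilter ℕ) (hp : IsMinimalIdempotent p)
    (A : Set ℕ) (hA : A ∈ linComb m a fun _ => p)
    (T : Finset (ℕ → ℕ)) (hT : T.Nonempty) (hTP : ∀ P ∈ T, IsPolyZeroConst P) :
    ∃ (α : Finset (ℕ → ℕ) → ℕ) (H : Finset (ℕ → ℕ) → Finset ℕ),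
      (∀ F : Finset (ℕ → ℕ), F.Nonempty → (H F).Nonempty) ∧
      (∀ F G : Finset (ℕ → ℕ), F.Nonempty → F ⊂ G →
        ∀ x ∈ H F, ∀ y ∈ H G, x < y) ∧
      (∀ G : ℕ → Finset (ℕ → ℕ),
        (∀ i, (G i).Nonempty) → (∀ i j, i < j → G i ⊂ G j) →
        ∀ f : ℕ → ℕ → ℕ, (∀ i, f i ∈ G i) →
        ∀ P : Fin m → ℕ → ℕ, (∀ l, P l ∈ T) →
        ∀ β : Fin m → Finset ℕ,
          (∀ l, (β l).Nonempty) →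
          (∀ l l' : Fin m, l < l' → ∀ x ∈ β l, ∀ y ∈ β l', x < y) →
          ∑ l : Fin m, a l * ((∑ i ∈ β l, α (G i)) +
              P l (∑ i ∈ β l, ∑ t ∈ H (G i), f i t)) ∈ A) := by
  classical
  obtain ⟨k, rfl⟩ : ∃ k, m = k + 1 := ⟨m - 1, by omega⟩
  obtain ⟨Q₀, hQ₀⟩ := hT
  let a' : ℕ → ℕ := fun l => if h : l < k + 1 then a ⟨l, h⟩ else 0
  have ha' : ∀ i : Fin (k + 1), a' i = a i := fun i => dif_pos i.2
  have hA' : A ∈ qN p (k + 1) a' := by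
    rw [← linComb_eq]
    have : (fun i : Fin (k + 1) => a' i) = a := funext ha'
    rw [this]; exact hA
  let I : Set St := (fun P => St.mk k a' A 0 0 P) '' (T : Set (ℕ → ℕ))
  have hI : I.Finite := T.finite_toSet.image _
  have hIV : ∀ τ ∈ I, τ.Valid p := by
    rintro _ ⟨P, hP, rfl⟩
    exact valid_start hp.1 k a' A P (hTP P hP) hA'
  obtain ⟨Y, hY⟩ := wf_choice (Y := Dat p) (r := fun F G : Finset (ℕ → ℕ) => F ⊂ G)
    wellFounded_lt (Rel I T) (rel_exists hp I hI hIV T hTP)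
  refine ⟨fun F => (Y F).α, fun F => (Y F).H, fun F _ => (Y F).hH,
    fun F G _ hFG x hx y hy => (hY G).1 F hFG x hx y hy, ?_⟩
  intro G _ hG f hf P hP β hβ hord
  have := final hY hG hf k a' A 0 (fun l => if h : l < k + 1 then P ⟨l, h⟩ else Q₀)
    (fun l => if h : l < k + 1 then β ⟨l, h⟩ else ∅)
    (by intro l; split_ifs with h; exacts [hP _, hQ₀])
    (fun Q hQ i _ => Or.inl ⟨Q, hQ, rfl⟩)
    (by intro l hl; simp only [dif_pos hl]; exact hβ _)
    (by intros; omega)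
    (by
      intro l l' hll hl'
      simp only [dif_pos hl', dif_pos (hll.trans hl')]
      exact hord _ _ hll)
  rw [Finset.sum_range] at this
  simpa only [ha', Fin.is_lt, dif_pos, Fin.eta] using this

end MultiCST
end

section
/- Let m ∈ ℕ with m ≥ 1, let a₁,…,a_m ∈ ℕ, let p₁,…,p_m be minimal idempotent ultrafilters on ℕ, and let A ∈ a₁·p₁ + ⋯ + a_m·p_m. Then for every T ∈ 𝒫_f(ℙ) there exist functions α₁,…,α_m : 𝒫_f(ℕ^ℕ) → ℕ and H₁,…,H_m : 𝒫_f(ℕ^ℕ) → 𝒫_f(ℕ) such that (1) whenever F ⊊ G in 𝒫_f(ℕ^ℕ), max H_l(F) < min H_l(G) for every l ∈ {1,…,m}, and (2) whenever G₁ ⊊ G₂ ⊊ ⋯ is an infinite strictly increasing chain in 𝒫_f(ℕ^ℕ), f_i ∈ G_i for each i ∈ ℕ, P₁,…,P_m ∈ T, and β₁ < ⋯ < β_m are in 𝒫_f(ℕ), then Σ_{l=1}^m a_l·(Σ_{i∈β_l}α_l(G_i) + P_l(Σ_{i∈β_l}Σ_{t∈H_l(G_i)}f_i(t))) ∈ A.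 -/
namespace MultiCST

open Filter

/-- `Good Big q F`. -/
def GoodFam {M : Type*} (Big : Set ℤ → Prop) (q : Ultrafilter M) (F : Finset (M → ℤ)) : Prop :=
  ∀ B, Big B → ∀ᶠ y in (q : Filter M), Big {x | x ∈ B ∧ ∀ f ∈ F, x + f y ∈ B}

open Classical in
/-- derived family -/
noncomputable def derFam {M : Type*} [AddCommMonoid M] (F : Finset (M → ℤ)) (f0 : M → ℤ)
    (Hs : Finset M) : Finset (M → ℤ) :=
  (F ×ˢ Hs).image (fun fh => fun y => fh.1 (fh.2 + y) - fh.1 fh.2 - f0 y)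

theorem star_facts {M : Type*} [AddCommMonoid M] (q : Ultrafilter M)
    (hq : ∀ S : Set M, (∀ᶠ y in (q : Filter M), y ∈ S) →
      ∀ᶠ y in (q : Filter M), ∀ᶠ z in (q : Filter M), y + z ∈ S)
    (S : Set M) (hS : ∀ᶠ y in (q : Filter M), y ∈ S) :
    ∃ S' : Set M, S' ⊆ S ∧ (∀ᶠ y in (q : Filter M), y ∈ S') ∧
      ∀ y ∈ S', ∀ᶠ z in (q : Filter M), y + z ∈ S' := by
  refine ⟨{y | y ∈ S ∧ ∀ᶠ z in (q : Filter M), y + z ∈ S}, fun y hy => hy.1, ?_, ?_⟩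
  · filter_upwards [hS, hq S hS] with y h1 h2 using ⟨h1, h2⟩
  · rintro y ⟨h1, h2⟩
    filter_upwards [h2, hq {z | y + z ∈ S} h2] with z h3 h4
    refine ⟨h3, ?_⟩
    filter_upwards [h4] with w hw
    simpa [add_assoc] using hw

theorem pet_step_s15 {M : Type*} [AddCommMonoid M] (Big : Set ℤ → Prop) (q : Ultrafilter M)
    (hmono : ∀ B C, Big B → B ⊆ C → Big C)
    (htrans : ∀ B, Big B → ∀ k : ℤ, Big {x | x + k ∈ B})
    (hsynd : ∀ B, Big B → ∃ E : Finset ℤ, ∀ C, Big C → ∃ n ∈ E, Big {x | x ∈ C ∧ x + n ∈ B})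
    (hq : ∀ S : Set M, (∀ᶠ y in (q : Filter M), y ∈ S) →
      ∀ᶠ y in (q : Filter M), ∀ᶠ z in (q : Filter M), y + z ∈ S)
    (F : Finset (M → ℤ)) (hF0 : ∀ f ∈ F, f 0 = 0) (f0 : M → ℤ)
    (h : ∀ Hs : Finset M, GoodFam Big q (derFam F f0 Hs)) : GoodFam Big q F := by
  classical
  intro B hB
  by_contra hcon
  rw [Ultrafilter.eventually_not.symm] at hcon
  obtain ⟨Y, hYS, hYq, hYstar⟩ := star_facts q hq _ hcon
  obtain ⟨E, hE⟩ := hsynd B hB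
  have key : ∀ k : ℕ, ∃ (S : Finset ℤ) (C : Set ℤ) (g : ℤ → M), S ⊆ E ∧ S.card = k ∧ Big C ∧
      (∀ n ∈ S, g n ∈ Y ∧ ∀ x ∈ C, ∀ f ∈ F, x + f (g n) + n ∈ B) := by
    intro k
    induction k with
    | zero => exact ⟨∅, B, fun _ => 0, by simp, by simp, hB, by simp⟩
    | succ k ih =>
      obtain ⟨S, C, g, hSE, hcard, hC, hS⟩ := ih
      obtain ⟨n, hnE, hn⟩ := hE C hC
      by_cases hnS : n ∈ S
      · exfalso
        apply hYS (hS n hnS).1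
        have h1 := htrans _ hn (-n)
        refine hmono _ _ h1 ?_
        rintro x ⟨hx1, hx2⟩
        refine ⟨by simpa using hx2, fun f hf => ?_⟩
        have := (hS n hnS).2 _ hx1 f hf
        convert this using 1
        ring
      · -- new color
        have hder := h ((insert n S).image (Function.update g n 0)) _ hn
        have hev : ∀ᶠ y in (q : Filter M), ∀ n' ∈ S, g n' + y ∈ Y := by
          rw [Filter.eventually_all_finset]
          intro n' hn'
          exact hYstar _ (hS n' hn').1
        obtain ⟨y, hy1, hy2, hy3⟩ := (hder.and (hev.and hYq)).exists
        refine ⟨insert n S, _, fun n' => Function.update g n 0 n' + y, ?_, ?_,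
          htrans _ hy1 (f0 y), ?_⟩
        · intro z hz
          rcases Finset.mem_insert.1 hz with rfl | hz
          · exact hnE
          · exact hSE hz
        · rw [Finset.card_insert_of_notMem hnS, hcard]
        · intro n' hn'
          constructor
          · by_cases hnn : n' = n
            · subst hnn; simpa using hy3
            · simp only [Function.update_of_ne hnn]
              exact hy2 _ ((Finset.mem_insert.1 hn').resolve_left hnn)
          · rintro x ⟨-, hx⟩ f hf
            have h1 := hx _ (Finset.mem_image_of_mem _ (Finset.mk_mem_product hf
              (Finset.mem_image_of_mem (Function.update g n 0) hn')))
            simp only at h1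
            obtain ⟨h2, h3⟩ := h1
            by_cases hnn : n' = n
            · subst hnn
              simp only [Function.update_self, hF0 f hf] at h3 ⊢
              convert h3 using 1; ring
            · have := (hS n' ((Finset.mem_insert.1 hn').resolve_left hnn)).2 _ h2 f hf
              simp only [Function.update_of_ne hnn] at this ⊢
              convert this using 1; ring
  obtain ⟨S, C, g, hSE, hcard, -⟩ := key (E.card + 1)
  have := Finset.card_le_card hSE
  omega

/-- polynomial maps of degree at most `e` vanishing at zero -/
def PolyDeg (M : Type*) [AddCommMonoid M] : ℕ → AddSubgroup (M → ℤ)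
  | 0 => ⊥
  | e + 1 =>
    { carrier := {f | f 0 = 0 ∧ ∀ h : M, (fun y => f (h + y) - f h - f y) ∈ PolyDeg M e}
      zero_mem' := by
        refine ⟨rfl, fun h => ?_⟩
        convert (PolyDeg M e).zero_mem using 1
        ext; simp
      add_mem' := by
        rintro f g ⟨hf0, hf⟩ ⟨hg0, hg⟩
        refine ⟨by simp [hf0, hg0], fun h => ?_⟩
        convert (PolyDeg M e).add_mem (hf h) (hg h) using 1
        ext; simp; ring
      neg_mem' := by
        rintro f ⟨hf0, hf⟩
        refine ⟨by simp [hf0], fun h => ?_⟩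
        convert (PolyDeg M e).neg_mem (hf h) using 1
        ext; simp; ring }

section
variable {M : Type*} [AddCommMonoid M]

theorem mem_polyDeg_zero {f : M → ℤ} : f ∈ PolyDeg M 0 ↔ f = 0 := by
  simp [PolyDeg]

theorem mem_polyDeg_succ {f : M → ℤ} {e : ℕ} : f ∈ PolyDeg M (e + 1) ↔
    f 0 = 0 ∧ ∀ h : M, (fun y => f (h + y) - f h - f y) ∈ PolyDeg M e := by
  rw [PolyDeg]; rfl

theorem polyDeg_apply_zero {f : M → ℤ} {e : ℕ} (hf : f ∈ PolyDeg M e) : f 0 = 0 := by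
  cases e with
  | zero => rw [mem_polyDeg_zero.1 hf]; rfl
  | succ e => exact (mem_polyDeg_succ.1 hf).1

theorem polyDeg_le_succ (e : ℕ) : PolyDeg M e ≤ PolyDeg M (e + 1) := by
  induction e with
  | zero => intro f hf; rw [mem_polyDeg_zero.1 hf]; exact zero_mem _
  | succ e ih =>
    intro f hf
    rw [mem_polyDeg_succ] at hf ⊢
    exact ⟨hf.1, fun h => ih (hf.2 h)⟩

theorem polyDeg_mono : Monotone (PolyDeg M) := monotone_nat_of_le_succ polyDeg_le_succ

theorem polyDeg_level {f : M → ℤ} (hf : f ≠ 0) {d : ℕ} (hd : f ∈ PolyDeg M d) :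
    ∃ k < d, f ∈ PolyDeg M (k + 1) ∧ f ∉ PolyDeg M k := by
  induction d with
  | zero => exact absurd (mem_polyDeg_zero.1 hd) hf
  | succ d ih =>
    by_cases h : f ∈ PolyDeg M d
    · obtain ⟨k, hk, h2⟩ := ih h
      exact ⟨k, by omega, h2⟩
    · exact ⟨d, by omega, hd, h⟩

theorem polyDeg_level_unique {f : M → ℤ} {j k : ℕ} (h1 : f ∈ PolyDeg M (j + 1))
    (h2 : f ∉ PolyDeg M j) (h3 : f ∈ PolyDeg M (k + 1)) (h4 : f ∉ PolyDeg M k) : j = k := by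
  rcases lt_trichotomy j k with h | h | h
  · exact absurd (polyDeg_mono (by omega : j + 1 ≤ k) h1) h4
  · exact h
  · exact absurd (polyDeg_mono (by omega : k + 1 ≤ j) h3) h2

theorem polyDeg_mul (n : ℕ) : ∀ (a b : ℕ) (f g : M → ℤ), a + b ≤ n → f ∈ PolyDeg M a →
    g ∈ PolyDeg M b → f * g ∈ PolyDeg M n := by
  induction n with
  | zero =>
    intro a b f g hab hf hg
    obtain rfl : a = 0 := by omega
    rw [mem_polyDeg_zero.1 hf, zero_mul]; exact zero_mem _
  | succ n ih =>
    intro a b f g hab hf hg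
    rcases a with _ | a
    · rw [mem_polyDeg_zero.1 hf, zero_mul]; exact zero_mem _
    rcases b with _ | b
    · rw [mem_polyDeg_zero.1 hg, mul_zero]; exact zero_mem _
    have hf' := mem_polyDeg_succ.1 hf
    have hg' := mem_polyDeg_succ.1 hg
    refine mem_polyDeg_succ.2 ⟨by simp [hf'.1], fun h => ?_⟩
    set Df := fun y => f (h + y) - f h - f y with hDf
    set Dg := fun y => g (h + y) - g h - g y with hDg
    have e1 : (fun y => (f * g) (h + y) - (f * g) h - (f * g) y) =
        (g h) • f + f * Dg + (f h) • g + (f h) • Dg + Df * g + (g h) • Df + Df * Dg := by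
      ext y
      simp only [Pi.mul_apply, Pi.add_apply, Pi.smul_apply, smul_eq_mul, hDf, hDg]
      ring
    rw [e1]
    have m1 : f ∈ PolyDeg M n := polyDeg_mono (by omega) hf
    have m2 : g ∈ PolyDeg M n := polyDeg_mono (by omega) hg
    have m3 : Df ∈ PolyDeg M n := polyDeg_mono (by omega) (hf'.2 h)
    have m4 : Dg ∈ PolyDeg M n := polyDeg_mono (by omega) (hg'.2 h)
    have n1 : f * Dg ∈ PolyDeg M n := ih (a + 1) b _ _ (by omega) hf (hg'.2 h)
    have n2 : Df * g ∈ PolyDeg M n := ih a (b + 1) _ _ (by omega) (hf'.2 h) hg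
    have n3 : Df * Dg ∈ PolyDeg M n := ih a b _ _ (by omega) (hf'.2 h) (hg'.2 h)
    exact add_mem (add_mem (add_mem (add_mem (add_mem (add_mem (zsmul_mem m1 _) n1)
      (zsmul_mem m2 _)) (zsmul_mem m4 _)) n2) (zsmul_mem m3 _)) n3

end

theorem wf_weight (d : ℕ) : WellFounded
    (fun u v : Fin d → ℕ => ∃ e, u e < v e ∧ ∀ j, e < j → u j ≤ v j) := by
  have hw : WellFounded (Pi.Lex (fun i j : Fin d => j < i)
      (fun {_} (x y : ℕ) => x < y)) :=
    Pi.Lex.wellFounded _ (fun _ => wellFounded_lt)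
  refine Subrelation.wf ?_ hw
  rintro u v ⟨e, he, hj⟩
  have hne : (Finset.univ.filter (fun i => u i < v i)).Nonempty := ⟨e, by simpa using he⟩
  refine ⟨(Finset.univ.filter (fun i => u i < v i)).max' hne, ?_, ?_⟩
  · intro j hlt
    have h1 : e ≤ (Finset.univ.filter (fun i => u i < v i)).max' hne :=
      Finset.le_max' _ _ (by simpa using he)
    refine le_antisymm (hj j (lt_of_le_of_lt h1 hlt)) ?_
    by_contra hc
    have := Finset.le_max' (Finset.univ.filter (fun i => u i < v i)) j (by simpa using hc)
    exact absurd hlt (not_lt.2 this)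
  · have := Finset.max'_mem _ hne
    simpa using this

open Classical in
/-- number of classes at level `e` -/
noncomputable def levelSet {M : Type*} [AddCommMonoid M] (F : Finset (M → ℤ)) (e : ℕ) :
    Finset ((M → ℤ) ⧸ PolyDeg M e) :=
  (F.filter (fun f => f ∈ PolyDeg M (e + 1) ∧ f ∉ PolyDeg M e)).image
    (QuotientAddGroup.mk (s := PolyDeg M e))

theorem pet_all {M : Type*} [AddCommMonoid M] (Big : Set ℤ → Prop) (q : Ultrafilter M)
    (hmono : ∀ B C, Big B → B ⊆ C → Big C)
    (htrans : ∀ B, Big B → ∀ k : ℤ, Big {x | x + k ∈ B})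
    (hsynd : ∀ B, Big B → ∃ E : Finset ℤ, ∀ C, Big C → ∃ n ∈ E, Big {x | x ∈ C ∧ x + n ∈ B})
    (hq : ∀ S : Set M, (∀ᶠ y in (q : Filter M), y ∈ S) →
      ∀ᶠ y in (q : Filter M), ∀ᶠ z in (q : Filter M), y + z ∈ S)
    (d : ℕ) (F : Finset (M → ℤ)) (hFd : ∀ f ∈ F, f ∈ PolyDeg M d) : GoodFam Big q F := by
  classical
  have hwf := InvImage.wf (fun (F : Finset (M → ℤ)) (e : Fin d) => (levelSet F e).card)
    (wf_weight d)
  induction F using hwf.induction with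
  | h F ih =>
  suffices hG : GoodFam Big q (F.erase 0) by
    intro B hB
    filter_upwards [hG B hB] with y hy
    refine hmono _ _ hy ?_
    rintro x ⟨hx1, hx2⟩
    refine ⟨hx1, fun f hf => ?_⟩
    by_cases h0 : f = 0
    · subst h0; simpa using hx1
    · exact hx2 f (Finset.mem_erase.2 ⟨h0, hf⟩)
  by_cases hemp : F.erase 0 = ∅
  · rw [hemp]
    intro B hB
    exact Filter.Eventually.of_forall fun y => hmono _ _ hB (by intro x hx; simpa using hx)
  have hex : ∃ e, ∃ f ∈ F.erase 0, f ∈ PolyDeg M e := by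
    obtain ⟨f, hf⟩ := Finset.nonempty_iff_ne_empty.2 hemp
    exact ⟨d, f, hf, hFd f (Finset.mem_of_mem_erase hf)⟩
  obtain ⟨f0, hf0, hf0e⟩ := Nat.find_spec hex
  have hmin := fun n => @Nat.find_min _ _ hex n
  obtain ⟨e, he⟩ : ∃ e, Nat.find hex = e + 1 := by
    rcases Nat.eq_zero_or_eq_succ_pred (Nat.find hex) with h | h
    · rw [h] at hf0e
      exact absurd (mem_polyDeg_zero.1 hf0e) (Finset.mem_erase.1 hf0).1
    · exact ⟨_, h⟩
  rw [he] at hf0e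
  have hlow : ∀ f ∈ F.erase 0, f ∉ PolyDeg M e := fun f hf hfe =>
    hmin e (by omega) ⟨f, hf, hfe⟩
  have hed : e < d := by
    by_contra hc
    exact hlow f0 hf0 (polyDeg_mono (by omega : d ≤ e) (hFd f0 (Finset.mem_of_mem_erase hf0)))
  refine pet_step_s15 Big q hmono htrans hsynd hq _
    (fun f hf => polyDeg_apply_zero (hFd f (Finset.mem_of_mem_erase hf))) f0 (fun Hs => ?_)
  have hform : ∀ f' ∈ derFam (F.erase 0) f0 Hs, ∃ f ∈ F.erase 0, ∃ D : M → ℤ,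
      (∀ k, f ∈ PolyDeg M (k + 1) → D ∈ PolyDeg M k) ∧ f' = f + D - f0 := by
    intro f' hf'
    obtain ⟨⟨f, h⟩, hfh, rfl⟩ := Finset.mem_image.1 hf'
    refine ⟨f, (Finset.mem_product.1 hfh).1, fun y => f (h + y) - f h - f y,
      fun k hk => (mem_polyDeg_succ.1 hk).2 h, ?_⟩
    ext y; simp
  have hlev : ∀ f' ∈ derFam (F.erase 0) f0 Hs, ∀ j, e ≤ j → f' ∈ PolyDeg M (j + 1) →
      f' ∉ PolyDeg M j → ∃ f ∈ F.erase 0, f ∈ PolyDeg M (j + 1) ∧ f ∉ PolyDeg M j ∧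
        f' - (f - f0) ∈ PolyDeg M j := by
    intro f' hf' j hej h1 h2
    obtain ⟨f, hf, D, hD, rfl⟩ := hform f' hf'
    obtain ⟨k, hkd, hk1, hk2⟩ := polyDeg_level (Finset.mem_erase.1 hf).1
      (hFd f (Finset.mem_of_mem_erase hf))
    have hek : e ≤ k := by
      by_contra hc
      exact hlow f hf (polyDeg_mono (by omega : k + 1 ≤ e) hk1)
    have hDk := hD k hk1
    have hjk : j = k := by
      rcases Nat.lt_or_ge e k with hlt | hge
      · have hf0k : f0 ∈ PolyDeg M k := polyDeg_mono (by omega : e + 1 ≤ k) hf0e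
        refine polyDeg_level_unique h1 h2 ?_ ?_
        · exact sub_mem (add_mem hk1 (polyDeg_le_succ _ hDk)) (polyDeg_le_succ _ hf0k)
        · intro hc
          apply hk2
          have := add_mem (sub_mem hc hDk) hf0k
          convert this using 1
          abel
      · obtain rfl : e = k := by omega
        by_contra hne
        apply h2
        have : f + D - f0 ∈ PolyDeg M (e + 1) :=
          sub_mem (add_mem hk1 (polyDeg_le_succ _ hDk)) hf0e
        exact polyDeg_mono (by omega) this
    subst hjk
    refine ⟨f, hf, hk1, hk2, ?_⟩
    convert hDk using 1
    abel
  refine ih _ ?_ ?_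
  · refine ⟨⟨e, hed⟩, ?_, ?_⟩
    · -- strict decrease
      have hmem0 : (QuotientAddGroup.mk f0 : (M → ℤ) ⧸ PolyDeg M e) ∈ levelSet F e :=
        Finset.mem_image_of_mem _ (Finset.mem_filter.2
          ⟨Finset.mem_of_mem_erase hf0, hf0e, hlow f0 hf0⟩)
      have hsub : (levelSet (derFam (F.erase 0) f0 Hs) e).image
          (fun z => z + (QuotientAddGroup.mk f0 : (M → ℤ) ⧸ PolyDeg M e)) ⊆
          (levelSet F e).erase (QuotientAddGroup.mk f0) := by
        intro z hz
        obtain ⟨z', hz', rfl⟩ := Finset.mem_image.1 hz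
        obtain ⟨f', hf', rfl⟩ := Finset.mem_image.1 hz'
        obtain ⟨hf', h1, h2⟩ := Finset.mem_filter.1 hf'
        obtain ⟨f, hf, hk1, hk2, hd⟩ := hlev f' hf' e le_rfl h1 h2
        have heq : (QuotientAddGroup.mk f' : (M → ℤ) ⧸ PolyDeg M e) + QuotientAddGroup.mk f0
            = QuotientAddGroup.mk f := by
          rw [← QuotientAddGroup.mk_add, QuotientAddGroup.eq]
          convert neg_mem hd using 1
          abel
        refine Finset.mem_erase.2 ⟨?_, ?_⟩
        · intro hc
          apply h2
          have h3 : (QuotientAddGroup.mk f' : (M → ℤ) ⧸ PolyDeg M e) = 0 := by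
            simpa using hc
          exact (QuotientAddGroup.eq_zero_iff _).1 h3
        · simp only [heq]
          exact Finset.mem_image_of_mem _ (Finset.mem_filter.2
            ⟨Finset.mem_of_mem_erase hf, hk1, hk2⟩)
      have hc := Finset.card_le_card hsub
      rw [Finset.card_image_of_injective _ (add_left_injective _),
        Finset.card_erase_of_mem hmem0] at hc
      have hpos := Finset.card_pos.2 ⟨_, hmem0⟩
      simp only
      omega
    · intro j hj
      have hej : e < (j : ℕ) := hj
      apply Finset.card_le_card
      intro z hz
      obtain ⟨f', hf', rfl⟩ := Finset.mem_image.1 hz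
      obtain ⟨hf', h1, h2⟩ := Finset.mem_filter.1 hf'
      obtain ⟨f, hf, hk1, hk2, hd⟩ := hlev f' hf' j hej.le h1 h2
      have hf0j : f0 ∈ PolyDeg M j := polyDeg_mono (by omega : e + 1 ≤ (j : ℕ)) hf0e
      have heq : (QuotientAddGroup.mk f' : (M → ℤ) ⧸ PolyDeg M j)
          = QuotientAddGroup.mk f := by
        rw [QuotientAddGroup.eq]
        have := neg_mem (sub_mem hd hf0j)
        convert this using 1
        abel
      rw [heq]
      exact Finset.mem_image_of_mem _ (Finset.mem_filter.2
            ⟨Finset.mem_of_mem_erase hf, hk1, hk2⟩)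
  · intro f' hf'
    obtain ⟨f, hf, D, hD, rfl⟩ := hform f' hf'
    have hfd := hFd f (Finset.mem_of_mem_erase hf)
    have hf0d := hFd f0 (Finset.mem_of_mem_erase hf0)
    refine sub_mem (add_mem hfd ?_) hf0d
    have : D ∈ PolyDeg M (d - 1) := hD _ (by convert hfd using 2; omega)
    exact polyDeg_mono (by omega) this

section Ultra
attribute [local instance] Ultrafilter.add Ultrafilter.addSemigroup

theorem uAdd_eq (p q : Ultrafilter ℕ) : uAdd p q = p + q :=
  Ultrafilter.ext fun _ => Iff.rfl

theorem min_absorb (p : Ultrafilter ℕ) (hp : IsMinimalIdempotent p) (r : Ultrafilter ℕ) :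
    ∃ t, t + (r + p) = p := by
  obtain ⟨hpi, hmin⟩ := hp
  simp only [IdempotentUF, uAdd_eq] at hpi hmin
  obtain ⟨e, ⟨t, ht⟩, hee⟩ := exists_idempotent_in_compact_add_subsemigroup
    Ultrafilter.continuous_add_left (Set.range (fun t => t + (r + p)))
    ⟨_, ⟨r, rfl⟩⟩ (isCompact_range (Ultrafilter.continuous_add_left _)) (by
      rintro _ ⟨x, rfl⟩ _ ⟨y, rfl⟩
      exact ⟨x + (r + p) + y, by simp only [add_assoc]⟩)
  simp only at ht
  have hep : e + p = e := by rw [← ht, add_assoc, add_assoc, hpi]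
  have h1 := hmin (p + e)
    (by rw [add_assoc, ← add_assoc e p e, hep, hee])
    (by rw [add_assoc, hep]) (by rw [← add_assoc, hpi])
  exact ⟨p + t, by rw [add_assoc, ht, h1]⟩

/-- sets of integers with a member of the minimal left ideal of `p` -/
def BigP (p : Ultrafilter ℕ) (B : Set ℤ) : Prop :=
  ∃ r : Ultrafilter ℕ, ∀ᶠ n : ℕ in ((r + p : Ultrafilter ℕ) : Filter ℕ), (n : ℤ) ∈ B

theorem bigP_trans (p : Ultrafilter ℕ) (hp : IsMinimalIdempotent p) (B : Set ℤ)
    (hB : BigP p B) (k : ℤ) : BigP p {x | x + k ∈ B} := by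
  obtain ⟨r, hr⟩ := hB
  obtain ⟨j, rfl | rfl⟩ := k.eq_nat_or_neg
  · obtain ⟨t, ht⟩ := min_absorb p hp ((pure j : Ultrafilter ℕ) + r)
    have e1 : r + p = (r + t) + ((pure j : Ultrafilter ℕ) + (r + p)) := by
      conv_lhs => rw [← ht]
      simp only [add_assoc]
    rw [e1] at hr
    refine ⟨(r + t) + r, ?_⟩
    rw [add_assoc]
    rw [Ultrafilter.eventually_add] at hr ⊢
    filter_upwards [hr] with m hm
    rw [Ultrafilter.eventually_add] at hm
    have hm' : ∀ᶠ x in ((r + p : Ultrafilter ℕ) : Filter ℕ), ((m + (j + x) : ℕ) : ℤ) ∈ B := hm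
    filter_upwards [hm'] with x hx
    convert hx using 1
    push_cast; ring
  · refine ⟨(pure j : Ultrafilter ℕ) + r, ?_⟩
    rw [add_assoc, Ultrafilter.eventually_add]
    change ∀ᶠ x in ((r + p : Ultrafilter ℕ) : Filter ℕ), ((j + x : ℕ) : ℤ) ∈ {x | x + -(j : ℤ) ∈ B}
    filter_upwards [hr] with x hx
    convert hx using 1
    push_cast; ring

theorem bigP_synd (p : Ultrafilter ℕ) (hp : IsMinimalIdempotent p) (B : Set ℤ)
    (hB : BigP p B) :
    ∃ E : Finset ℤ, ∀ C, BigP p C → ∃ n ∈ E, BigP p {x | x ∈ C ∧ x + n ∈ B} := by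
  classical
  obtain ⟨r, hr⟩ := hB
  have hopen : ∀ n : ℕ, IsOpen {s : Ultrafilter ℕ |
      ∀ᶠ x : ℕ in ((s + p : Ultrafilter ℕ) : Filter ℕ), (x : ℤ) + n ∈ B} := fun n =>
    ultrafilter_isOpen_basic {m : ℕ | ∀ᶠ x in (p : Filter ℕ), ((m + x : ℕ) : ℤ) + n ∈ B}
  obtain ⟨E, hE⟩ := isCompact_univ.elim_finite_subcover _ hopen (by
    intro s _
    obtain ⟨t, ht⟩ := min_absorb p hp s
    have e1 : r + p = (r + t) + (s + p) := by
      conv_lhs => rw [← ht]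
      simp only [add_assoc]
    rw [e1, Ultrafilter.eventually_add] at hr
    obtain ⟨n, hn⟩ := hr.exists
    refine Set.mem_iUnion.2 ⟨n, ?_⟩
    simp only [Set.mem_ofPred_eq]
    filter_upwards [hn] with x hx
    convert hx using 1
    push_cast; ring)
  refine ⟨E.image (fun n : ℕ => (n : ℤ)), ?_⟩
  rintro C ⟨s, hs⟩
  obtain ⟨n, hn, hns⟩ := Set.mem_iUnion₂.1 (hE (Set.mem_univ s))
  refine ⟨n, Finset.mem_image_of_mem _ hn, s, ?_⟩
  filter_upwards [hs, hns] with x h1 h2 using ⟨h1, h2⟩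

theorem FS_finset {M : Type*} [AddCommMonoid M] (a : Stream' M) (m : M) (h : m ∈ Hindman.FS a) :
    ∃ H : Finset ℕ, H.Nonempty ∧ m = ∑ t ∈ H, a.get t := by
  classical
  induction h with
  | head' a => exact ⟨{0}, by simp, by simp [Stream'.head]⟩
  | tail' a m h ih =>
    obtain ⟨H, hH, rfl⟩ := ih
    refine ⟨H.map ⟨Nat.succ, Nat.succ_injective⟩, by simpa using hH, ?_⟩
    rw [Finset.sum_map]; rfl
  | cons' a m h ih =>
    obtain ⟨H, hH, rfl⟩ := ih
    refine ⟨insert 0 (H.map ⟨Nat.succ, Nat.succ_injective⟩), by simp, ?_⟩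
    rw [Finset.sum_insert (by simp), Finset.sum_map]; rfl

theorem poly_mem_polyDeg (P : ℕ → ℕ) (hP : IsPolyZeroConst P) (f : ℕ → ℕ) :
    ∃ e, (fun y : (ℕ → ℕ) → ℕ => (P (y f) : ℤ)) ∈ PolyDeg ((ℕ → ℕ) → ℕ) e := by
  obtain ⟨Q, hQ0, hQ⟩ := hP
  set ev : ((ℕ → ℕ) → ℕ) → ℤ := fun y => (y f : ℤ) with hev
  have hev1 : ev ∈ PolyDeg ((ℕ → ℕ) → ℕ) 1 := by
    rw [mem_polyDeg_succ]
    refine ⟨by simp [hev], fun h => ?_⟩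
    rw [mem_polyDeg_zero]
    ext y; simp [hev]
  have hpow : ∀ k, ev ^ (k + 1) ∈ PolyDeg ((ℕ → ℕ) → ℕ) (k + 1) := by
    intro k
    induction k with
    | zero => simpa using hev1
    | succ k ih =>
      rw [pow_succ]
      exact polyDeg_mul _ (k + 1) 1 _ _ le_rfl ih hev1
  refine ⟨Q.natDegree, ?_⟩
  have e1 : (fun y : (ℕ → ℕ) → ℕ => (P (y f) : ℤ)) =
      ∑ k ∈ Q.support, (Q.coeff k : ℤ) • ev ^ k := by
    ext y
    simp [hQ, Polynomial.eval_eq_sum, Polynomial.sum, hev]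
  rw [e1]
  refine sum_mem fun k hk => zsmul_mem ?_ _
  rcases k with _ | k
  · exact absurd hQ0 (Polynomial.mem_support_iff.1 hk)
  · exact polyDeg_mono (Polynomial.le_natDegree_of_mem_supp _ hk) (hpow k)

theorem key_lemma (p : Ultrafilter ℕ) (hp : IsMinimalIdempotent p) (A : Set ℕ) (hA : A ∈ p)
    (F : Finset (ℕ → ℕ)) (T : Finset (ℕ → ℕ)) (hT : ∀ P ∈ T, IsPolyZeroConst P) (N : ℕ) :
    ∃ (α : ℕ) (H : Finset ℕ), H.Nonempty ∧ (∀ t ∈ H, N < t) ∧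
      ∀ f ∈ F, ∀ P ∈ T, α + P (∑ t ∈ H, f t) ∈ A := by
  classical
  let a : Stream' ((ℕ → ℕ) → ℕ) := fun t => fun f => f (t + (N + 1))
  obtain ⟨q, hqq, hqFS⟩ := Hindman.exists_idempotent_ultrafilter_le_FS a
  have hq : ∀ S : Set ((ℕ → ℕ) → ℕ), (∀ᶠ y in (q : Filter ((ℕ → ℕ) → ℕ)), y ∈ S) →
      ∀ᶠ y in (q : Filter ((ℕ → ℕ) → ℕ)), ∀ᶠ z in (q : Filter ((ℕ → ℕ) → ℕ)), y + z ∈ S := by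
    intro S hS
    rw [← hqq, Ultrafilter.eventually_add] at hS
    exact hS
  choose! deg hdeg using poly_mem_polyDeg
  let W : Finset (((ℕ → ℕ) → ℕ) → ℤ) :=
    (F ×ˢ T).image (fun fP => fun y => (fP.2 (y fP.1) : ℤ))
  have hW : ∀ w ∈ W, w ∈ PolyDeg ((ℕ → ℕ) → ℕ) ((F ×ˢ T).sup (fun fP => deg fP.2 fP.1)) := by
    intro w hw
    obtain ⟨fP, hfP, rfl⟩ := Finset.mem_image.1 hw
    exact polyDeg_mono (Finset.le_sup (f := fun fP : (ℕ → ℕ) × (ℕ → ℕ) => deg fP.2 fP.1) hfP)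
      (hdeg fP.2 (hT _ (Finset.mem_product.1 hfP).2) fP.1)
  have hgood := pet_all (BigP p) q
    (fun B C ⟨r, hr⟩ hBC => ⟨r, hr.mono fun _ h => hBC h⟩)
    (bigP_trans p hp) (bigP_synd p hp) hq _ W hW
  have hpp : p + p = p := by rw [← uAdd_eq]; exact hp.1
  have hbig : BigP p {x | ∃ n ∈ A, x = (n : ℤ)} := by
    refine ⟨p, ?_⟩
    rw [hpp]
    filter_upwards [hA] with n hn using ⟨n, hn, rfl⟩
  obtain ⟨y, ⟨r, hr⟩, hy⟩ := ((hgood _ hbig).and hqFS).exists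
  obtain ⟨α, -, hα⟩ := hr.exists
  obtain ⟨H, hH, rfl⟩ := FS_finset _ _ hy
  refine ⟨α, H.map ⟨fun t => t + (N + 1), add_left_injective _⟩, by simpa using hH, ?_, ?_⟩
  · intro t ht
    obtain ⟨u, -, rfl⟩ := Finset.mem_map.1 ht
    simp only [Function.Embedding.coeFn_mk]
    omega
  · intro f hf P hP
    obtain ⟨n, hn, hn2⟩ := hα _ (Finset.mem_image_of_mem _ (Finset.mk_mem_product hf hP))
    rw [Finset.sum_map]
    simp only [Finset.sum_apply] at hn2
    have : α + P (∑ t ∈ H, f (t + (N + 1))) = n := by exact_mod_cast hn2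
    simp only [Function.Embedding.coeFn_mk]
    rw [this]; exact hn

theorem star_nat (p : Ultrafilter ℕ) (hp : IdempotentUF p) (A : Set ℕ) (hA : A ∈ p) :
    ∃ S : Set ℕ, S ⊆ A ∧ S ∈ p ∧ ∀ y ∈ S, {z | y + z ∈ S} ∈ p := by
  refine star_facts p ?_ A hA
  intro S hS
  have : S ∈ uAdd p p := by rw [hp]; exact hS
  exact this

end Ultra

theorem poly_shift (P : ℕ → ℕ) (hP : IsPolyZeroConst P) (s : ℕ) :
    IsPolyZeroConst (fun y => P (s + y) - P s) ∧ ∀ y, P s ≤ P (s + y) := by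
  obtain ⟨Q, hQ0, hQ⟩ := hP
  set R := Q.comp (Polynomial.C s + Polynomial.X) with hR
  have hev : ∀ y, P (s + y) = R.divX.eval y * y + P s := by
    intro y
    have h0 : R.coeff 0 = P s := by
      rw [Polynomial.coeff_zero_eq_eval_zero, hR]; simp [hQ]
    have h1 : P (s + y) = R.eval y := by rw [hR]; simp [hQ]
    rw [h1, ← h0]
    conv_lhs => rw [← Polynomial.divX_mul_X_add R]
    simp
  refine ⟨⟨R.divX * Polynomial.X, by simp, fun y => ?_⟩, fun y => ?_⟩
  · simp [hev]
  · rw [hev]; omega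

/-- Pairs (sum of first components, sum of sequence values) along chains above `F` ending at `K`. -/
inductive Reach (g : Finset (ℕ → ℕ) → ℕ × Finset ℕ) (F : Finset (ℕ → ℕ)) :
    Finset (ℕ → ℕ) → ℕ → ℕ → Prop
  | base (K : Finset (ℕ → ℕ)) (f : ℕ → ℕ) (hFK : F ⊂ K) (hf : f ∈ K) :
      Reach g F K (g K).1 (∑ t ∈ (g K).2, f t)
  | step (K K' : Finset (ℕ → ℕ)) (σ s : ℕ) (f : ℕ → ℕ) (h : Reach g F K σ s) (hK : K ⊂ K')
      (hf : f ∈ K') : Reach g F K' (σ + (g K').1) (s + ∑ t ∈ (g K').2, f t)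

theorem Reach.ssubset {g : Finset (ℕ → ℕ) → ℕ × Finset ℕ} {F K : Finset (ℕ → ℕ)} {σ s : ℕ}
    (h : Reach g F K σ s) : F ⊂ K := by
  induction h with
  | base K f hFK hf => exact hFK
  | step K K' σ s f h hK hf ih => exact ih.trans hK

theorem Reach.congr {g g' : Finset (ℕ → ℕ) → ℕ × Finset ℕ} {F K : Finset (ℕ → ℕ)} {σ s : ℕ}
    (h : Reach g F K σ s) (hg : ∀ L, L ⊆ K → g L = g' L) : Reach g' F K σ s := by
  induction h with
  | base K f hFK hf =>
    rw [hg K (Finset.Subset.refl _)]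
    exact Reach.base K f hFK hf
  | step K K' σ s f h hK hf ih =>
    rw [hg K' (Finset.Subset.refl _)]
    exact Reach.step K K' σ s f (ih fun L hL => hg L (hL.trans hK.subset)) hK hf

theorem finite_below (K : Finset (ℕ → ℕ)) : {F : Finset (ℕ → ℕ) | F ⊂ K}.Finite :=
  K.powerset.finite_toSet.subset fun F hF => by
    simpa using (show F ⊂ K from hF).subset

theorem Reach.finite (g : Finset (ℕ → ℕ) → ℕ × Finset ℕ) (F K : Finset (ℕ → ℕ)) :
    {x : ℕ × ℕ | Reach g F K x.1 x.2}.Finite := by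
  induction K using Finset.strongInduction with
  | H K ih =>
  have h1 : (Set.image (fun f : ℕ → ℕ => ((g K).1, ∑ t ∈ (g K).2, f t)) (K : Set (ℕ → ℕ))).Finite :=
    K.finite_toSet.image _
  have h2 : (⋃ K' ∈ {F : Finset (ℕ → ℕ) | F ⊂ K},
      Set.image2 (fun (x : ℕ × ℕ) (f : ℕ → ℕ) => (x.1 + (g K).1, x.2 + ∑ t ∈ (g K).2, f t))
        {x : ℕ × ℕ | Reach g F K' x.1 x.2} (K : Set (ℕ → ℕ))).Finite :=
    (finite_below K).biUnion fun K' hK' => (ih K' hK').image2 _ K.finite_toSet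
  refine (h1.union h2).subset ?_
  rintro ⟨σ, s⟩ hx
  simp only [Set.mem_ofPred_eq] at hx
  cases hx with
  | base _ f hFK hf => exact Or.inl ⟨f, hf, rfl⟩
  | step K' _ σ s f h hK hf =>
    exact Or.inr (Set.mem_biUnion (show K' ∈ {F : Finset (ℕ → ℕ) | F ⊂ K} from hK)
      ⟨(σ, s), h, f, hf, rfl⟩)

theorem wf_build {X V : Type*} [Inhabited V] (R : X → X → Prop) (hR : WellFounded R)
    (htr : ∀ x y z, R x y → R y z → R x z)
    (Φ : X → (X → V) → Prop)
    (hcongr : ∀ x g g', (∀ y, y = x ∨ R y x → g y = g' y) → Φ x g → Φ x g')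
    (hstep : ∀ x g, (∀ y, R y x → Φ y g) → ∃ g', (∀ y, R y x → g' y = g y) ∧ Φ x g') :
    ∃ g, ∀ x, Φ x g := by
  classical
  let ext : ∀ x, (∀ y, R y x → V) → X → V := fun x prev y =>
    if h : R y x then prev y h else default
  let g : X → V := hR.fix fun x prev =>
    Classical.epsilon (fun v => ∃ g', (∀ y, R y x → g' y = ext x prev y) ∧ g' x = v ∧ Φ x g')
  have hg : ∀ x, g x = Classical.epsilon (fun v => ∃ g', (∀ y, R y x → g' y = g y) ∧
      g' x = v ∧ Φ x g') := by
    intro x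
    have h1 := hR.fix_eq (fun x prev =>
      Classical.epsilon (fun v => ∃ g', (∀ y, R y x → g' y = ext x prev y) ∧ g' x = v ∧ Φ x g')) x
    refine h1.trans ?_
    congr 1
    ext v
    refine exists_congr fun g' => and_congr_left fun _ => forall_congr' fun y =>
      forall_congr' fun hy => ?_
    simp only [ext, dif_pos hy]
    rfl
  refine ⟨g, fun x => ?_⟩
  induction x using hR.induction with
  | h x ih =>
  obtain ⟨g', h1, h2⟩ := hstep x g ih
  obtain ⟨g'', h3, h4, h5⟩ := Classical.epsilon_spec
    (p := fun v => ∃ g', (∀ y, R y x → g' y = g y) ∧ g' x = v ∧ Φ x g') ⟨g' x, g', h1, rfl, h2⟩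
  rw [← hg x] at h4
  refine hcongr x g'' g ?_ h5
  rintro y (rfl | hy)
  · exact h4
  · exact h3 y hy

theorem level_one (p : Ultrafilter ℕ) (hp : IsMinimalIdempotent p)
    (𝒜 : Finset (ℕ → ℕ) → Set ℕ) (h𝒜 : ∀ F, 𝒜 F ∈ p) (T : Finset (ℕ → ℕ))
    (hT : ∀ P ∈ T, IsPolyZeroConst P) :
    ∃ g : Finset (ℕ → ℕ) → ℕ × Finset ℕ, (∀ K, (g K).2.Nonempty) ∧
      (∀ F G, F ⊂ G → ∀ x ∈ (g F).2, ∀ y ∈ (g G).2, x < y) ∧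
      ∀ F K σ s, Reach g F K σ s → ∀ P ∈ T, σ + P s ∈ 𝒜 F := by
  classical
  choose S hSA hSp hSstar using fun F => star_nat p hp.1 (𝒜 F) (h𝒜 F)
  suffices h : ∃ g : Finset (ℕ → ℕ) → ℕ × Finset ℕ, ∀ K, (g K).2.Nonempty ∧
      (∀ F, F ⊂ K → ∀ x ∈ (g F).2, ∀ y ∈ (g K).2, x < y) ∧
      ∀ F σ s, Reach g F K σ s → ∀ P ∈ T, σ + P s ∈ S F by
    obtain ⟨g, hg⟩ := h
    exact ⟨g, fun K => (hg K).1, fun F G hFG => (hg G).2.1 F hFG,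
      fun F K σ s hr P hP => hSA F ((hg K).2.2 F σ s hr P hP)⟩
  refine wf_build (fun F G : Finset (ℕ → ℕ) => F ⊂ G) wellFounded_lt
    (fun _ _ _ h1 h2 => h1.trans h2) _ ?_ ?_
  · rintro K g g' hgg ⟨h1, h2, h3⟩
    have hK := hgg K (Or.inl rfl)
    have hsub : ∀ L, L ⊆ K → g L = g' L := fun L hL => hgg L (by
      rcases eq_or_ne L K with h | h
      · exact Or.inl h
      · exact Or.inr (Finset.ssubset_iff_subset_ne.2 ⟨hL, h⟩))
    refine ⟨hK ▸ h1, fun F hF => ?_, fun F σ s hr => h3 F σ s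
      (hr.congr fun L hL => (hsub L hL).symm)⟩
    rw [← hK, ← hsub F hF.subset]
    exact h2 F hF
  · intro K g ih
    have hZfin : (⋃ F ∈ {F : Finset (ℕ → ℕ) | F ⊂ K}, ⋃ K' ∈ {F : Finset (ℕ → ℕ) | F ⊂ K},
        Set.image (fun x : ℕ × ℕ => (F, x)) {x : ℕ × ℕ | Reach g F K' x.1 x.2}).Finite :=
      (finite_below K).biUnion fun F _ => (finite_below K).biUnion fun K' _ =>
        (Reach.finite g F K').image _
    set Z := hZfin.toFinset with hZ
    have hZmem : ∀ z, z ∈ Z ↔ ∃ K', K' ⊂ K ∧ Reach g z.1 K' z.2.1 z.2.2 := by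
      rintro ⟨F, σ, s⟩
      simp only [hZ, Set.Finite.mem_toFinset, Set.mem_iUnion, Set.mem_image, Set.mem_ofPred_eq,
        exists_prop]
      constructor
      · rintro ⟨F', hF', K', hK', ⟨σ', s'⟩, hr, heq⟩
        simp only [Prod.mk.injEq] at heq
        obtain ⟨rfl, rfl, rfl⟩ := heq
        exact ⟨K', hK', hr⟩
      · rintro ⟨K', hK', hr⟩
        exact ⟨F, hr.ssubset.trans hK', K', hK', (σ, s), hr, rfl⟩
    set B : Set ℕ := (⋂ F ∈ {F : Finset (ℕ → ℕ) | F ⊂ K}, S F) ∩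
      ⋂ zP ∈ ((Z ×ˢ T : Finset _) : Set ((Finset (ℕ → ℕ) × ℕ × ℕ) × (ℕ → ℕ))),
        {x | (zP.1.2.1 + zP.2 zP.1.2.2) + x ∈ S zP.1.1} with hB
    have hBp : B ∈ (p : Filter ℕ) := by
      refine inter_mem ((biInter_mem (finite_below K)).2 fun F _ => hSp F) ?_
      refine (biInter_mem (Finset.finite_toSet _)).2 ?_
      rintro ⟨z, P⟩ hzP
      obtain ⟨hz, hP⟩ := Finset.mem_product.1 (Finset.mem_coe.1 hzP)
      obtain ⟨K', hK', hr⟩ := (hZmem z).1 hz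
      exact hSstar _ _ ((ih K' hK').2.2 _ _ _ hr P hP)
    obtain ⟨α, H, hH, hN, hk⟩ := key_lemma p hp B hBp K
      (T ∪ (Z ×ˢ T).image (fun zP => fun y => zP.2 (zP.1.2.2 + y) - zP.2 zP.1.2.2))
      (by
        intro P hP
        rcases Finset.mem_union.1 hP with hP | hP
        · exact hT P hP
        · obtain ⟨⟨z, P⟩, hzP, rfl⟩ := Finset.mem_image.1 hP
          exact (poly_shift P (hT P (Finset.mem_product.1 hzP).2) _).1)
      (((finite_below K).toFinset.biUnion fun F => (g F).2).sup id)
    have hlow : ∀ L, L ⊂ K → Function.update g K (α, H) L = g L := fun L hL =>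
      Function.update_of_ne hL.ne _ _
    refine ⟨Function.update g K (α, H), hlow, by simpa using hH, ?_, ?_⟩
    · intro F hF x hx y hy
      rw [hlow F hF] at hx
      rw [Function.update_self] at hy
      refine lt_of_le_of_lt ?_ (hN y hy)
      exact Finset.le_sup (f := id) (Finset.mem_biUnion.2 ⟨F, by simpa using hF, hx⟩)
    · intro F σ s hr P hP
      cases hr with
      | base _ f hFK hf =>
        rw [Function.update_self]
        have := (hk f hf P (Finset.mem_union_left _ hP)).1
        exact Set.mem_iInter₂.1 this F hFK
      | step K' _ σ s f h hK hf =>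
        rw [Function.update_self]
        have hr : Reach g F K' σ s := h.congr fun L hL =>
          hlow L (lt_of_le_of_lt (show L ≤ K' from hL) hK)
        have hz : (F, σ, s) ∈ Z := (hZmem _).2 ⟨K', hK, hr⟩
        have h1 := (hk f hf _ (Finset.mem_union_right _ (Finset.mem_image_of_mem _
          (Finset.mk_mem_product hz hP)))).2
        have h2 := Set.mem_iInter₂.1 h1 ((F, σ, s), P)
          (Finset.mem_coe.2 (Finset.mk_mem_product hz hP))
        simp only [Set.mem_ofPred_eq] at h2
        have h3 := (poly_shift P (hT P hP) s).2 (∑ t ∈ H, f t)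
        convert h2 using 1
        simp only
        omega

theorem reach_of_chain (g : Finset (ℕ → ℕ) → ℕ × Finset ℕ) (F : Finset (ℕ → ℕ))
    (G : ℕ → Finset (ℕ → ℕ)) (hG : ∀ i j, i < j → G i ⊂ G j) (f : ℕ → ℕ → ℕ)
    (hf : ∀ i, f i ∈ G i) (β : Finset ℕ) : ∀ (hβ : β.Nonempty), (∀ i ∈ β, F ⊂ G i) →
    Reach g F (G (β.max' hβ)) (∑ i ∈ β, (g (G i)).1) (∑ i ∈ β, ∑ t ∈ (g (G i)).2, f i t) := by
  classical
  induction β using Finset.induction_on_max with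
  | empty => intro h; exact absurd h (by simp)
  | insert a s hlt ih =>
    intro hβ hF
    have hnot : a ∉ s := fun h => lt_irrefl _ (hlt a h)
    have hmax : (insert a s).max' hβ = a := by
      refine le_antisymm (Finset.max'_le _ _ _ fun y hy => ?_) (Finset.le_max' _ _ (by simp))
      rcases Finset.mem_insert.1 hy with rfl | hy
      · exact le_rfl
      · exact (hlt y hy).le
    rw [hmax, Finset.sum_insert hnot, Finset.sum_insert hnot]
    rcases s.eq_empty_or_nonempty with rfl | hs
    · simpa using Reach.base (g := g) (G a) (f a) (hF a (by simp)) (hf a)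
    · rw [add_comm, add_comm (∑ t ∈ (g (G a)).2, f a t)]
      exact Reach.step _ _ _ _ _ (ih hs fun i hi => hF i (Finset.mem_insert_of_mem hi))
        (hG _ _ (hlt _ (Finset.max'_mem s hs))) (hf a)

theorem gen_CST (m : ℕ) : ∀ (a : Fin m → ℕ)
    (p : Fin m → Ultrafilter ℕ) (_ : ∀ i, IsMinimalIdempotent (p i))
    (𝒜 : Finset (ℕ → ℕ) → Set ℕ) (_ : ∀ F, 𝒜 F ∈ linComb m a p)
    (T : Finset (ℕ → ℕ)) (_ : ∀ P ∈ T, IsPolyZeroConst P),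
    ∃ g : Fin m → Finset (ℕ → ℕ) → ℕ × Finset ℕ,
      (∀ l F, (g l F).2.Nonempty) ∧
      (∀ l F G, F ⊂ G → ∀ x ∈ (g l F).2, ∀ y ∈ (g l G).2, x < y) ∧
      (∀ F : Finset (ℕ → ℕ), ∀ G : ℕ → Finset (ℕ → ℕ),
        (∀ i j, i < j → G i ⊂ G j) →
        ∀ f : ℕ → ℕ → ℕ, (∀ i, f i ∈ G i) →
        ∀ P : Fin m → ℕ → ℕ, (∀ l, P l ∈ T) →
        ∀ β : Fin m → Finset ℕ,
          (∀ l, (β l).Nonempty) →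
          (∀ l l' : Fin m, l < l' → ∀ x ∈ β l, ∀ y ∈ β l', x < y) →
          (∀ l, ∀ i ∈ β l, F ⊂ G i) →
          ∑ l : Fin m, a l * ((∑ i ∈ β l, (g l (G i)).1) +
              P l (∑ i ∈ β l, ∑ t ∈ (g l (G i)).2, f i t)) ∈ 𝒜 F) := by
  induction m with
  | zero =>
    intro a p hp 𝒜 h𝒜 T hT
    refine ⟨fun l => l.elim0, fun l => l.elim0, fun l => l.elim0, ?_⟩
    intro F G hG f hf P hP β _ _ _
    have : (0 : ℕ) ∈ 𝒜 F := h𝒜 F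
    simpa using this
  | succ m ih =>
    intro a p hp 𝒜 h𝒜 T hT
    set r := linComb m (fun i => a i.succ) (fun i => p i.succ) with hr
    obtain ⟨g0, hg1, hg2, hg3⟩ := level_one (p 0) (hp 0)
      (fun F => {x | {w | a 0 * x + w ∈ 𝒜 F} ∈ r}) (fun F => h𝒜 F) T hT
    obtain ⟨g, h1, h2, h3⟩ := ih (fun i => a i.succ) (fun i => p i.succ) (fun i => hp i.succ)
      (fun K => ⋂ F ∈ {F : Finset (ℕ → ℕ) | F ⊂ K}, ⋂ P ∈ (T : Set (ℕ → ℕ)),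
        ⋂ x ∈ {x : ℕ × ℕ | Reach g0 F K x.1 x.2}, {w | a 0 * (x.1 + P x.2) + w ∈ 𝒜 F})
      (by
        intro K
        change _ ∈ ((linComb m (fun i => a i.succ) (fun i => p i.succ) : Ultrafilter ℕ) : Filter ℕ)
        refine (biInter_mem (finite_below K)).2 fun F _ =>
          (biInter_mem T.finite_toSet).2 fun P hP => (biInter_mem (Reach.finite g0 F K)).2 ?_
        rintro ⟨σ, s⟩ hx
        exact hg3 F K σ s hx P hP) T hT
    refine ⟨Fin.cons g0 g, ?_, ?_, ?_⟩
    · intro l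
      refine Fin.cases ?_ ?_ l
      · exact hg1
      · exact h1
    · intro l
      refine Fin.cases ?_ ?_ l
      · exact hg2
      · exact h2
    · intro F G hG f hf P hP β hβ hlt hF
      have hreach := reach_of_chain g0 F G hG f hf (β 0) (hβ 0) (hF 0)
      have h4 := h3 (G ((β 0).max' (hβ 0))) G hG f hf (fun l => P l.succ) (fun l => hP l.succ)
        (fun l => β l.succ) (fun l => hβ l.succ)
        (fun l l' hl => hlt l.succ l'.succ (Fin.succ_lt_succ_iff.2 hl))
        (fun l i hi => hG _ _ (hlt 0 l.succ (Fin.succ_pos l) _ (Finset.max'_mem _ _) i hi))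
      have h5 := Set.mem_iInter₂.1 (Set.mem_iInter₂.1 (Set.mem_iInter₂.1 h4 F hreach.ssubset)
        (P 0) (hP 0)) (∑ i ∈ β 0, (g0 (G i)).1, ∑ i ∈ β 0, ∑ t ∈ (g0 (G i)).2, f i t) hreach
      rw [Fin.sum_univ_succ]
      exact h5

/-- Polynomial extension of the linear-combination central sets theorem, several minimal
idempotents. -/
theorem linear_comb_polynomial_CST_II (m : ℕ) (hm : 1 ≤ m) (a : Fin m → ℕ)
    (p : Fin m → Ultrafilter ℕ) (hp : ∀ i, IsMinimalIdempotent (p i))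
    (A : Set ℕ) (hA : A ∈ linComb m a p)
    (T : Finset (ℕ → ℕ)) (hT : T.Nonempty) (hTP : ∀ P ∈ T, IsPolyZeroConst P) :
    ∃ (α : Fin m → Finset (ℕ → ℕ) → ℕ) (H : Fin m → Finset (ℕ → ℕ) → Finset ℕ),
      (∀ (l : Fin m) (F : Finset (ℕ → ℕ)), F.Nonempty → (H l F).Nonempty) ∧
      (∀ (l : Fin m) (F G : Finset (ℕ → ℕ)), F.Nonempty → F ⊂ G →
        ∀ x ∈ H l F, ∀ y ∈ H l G, x < y) ∧
      (∀ G : ℕ → Finset (ℕ → ℕ),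
        (∀ i, (G i).Nonempty) → (∀ i j, i < j → G i ⊂ G j) →
        ∀ f : ℕ → ℕ → ℕ, (∀ i, f i ∈ G i) →
        ∀ P : Fin m → ℕ → ℕ, (∀ l, P l ∈ T) →
        ∀ β : Fin m → Finset ℕ,
          (∀ l, (β l).Nonempty) →
          (∀ l l' : Fin m, l < l' → ∀ x ∈ β l, ∀ y ∈ β l', x < y) →
          ∑ l : Fin m, a l * ((∑ i ∈ β l, α l (G i)) +
              P l (∑ i ∈ β l, ∑ t ∈ H l (G i), f i t)) ∈ A) := by
  obtain ⟨g, h1, h2, h3⟩ := gen_CST m a p hp (fun _ => A) (fun _ => hA) T hTP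
  refine ⟨fun l F => (g l F).1, fun l F => (g l F).2, fun l F _ => h1 l F,
    fun l F G _ => h2 l F G, ?_⟩
  intro G hGne hG f hf P hP β hβ hlt
  exact h3 ∅ G hG f hf P hP β hβ hlt
    (fun l i _ => Finset.empty_ssubset.2 (hGne i))

end MultiCST
end
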